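/- For every integer n ≥ 1, the theory PA⁻ + BΣ_{n+1} proves FRT^{<ω}(Σ_{n+1}): in every model M of PA⁻ + BΣ_{n+1}, for all e ≥ 1, k ≥ 1 and x in M there exists y in M such that every Σ_{n+1}-definable k-coloring of [y]^e has an M-finite homogeneous set of cardinality x. -/

import Mathlib

/- Shared development: first-order arithmetic in the language {0,1,+,·,<},
   the arithmetic hierarchy, fragments of arithmetic, and coded finite
   combinatorics inside models. -/

open FirstOrder Language

namespace ArithFC

/-- Function symbols of the language of arithmetic: 0, 1, +, ·. -/
inductive Func : ℕ → Type
  | zero : Func 0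
  | one : Func 0
  | add : Func 2
  | mul : Func 2

/-- Relation symbols of the language of arithmetic: <. -/
inductive Rel : ℕ → Type
  | lt : Rel 2

/-- The first-order language {0, 1, +, ·, <}. -/
def lang : Language :=
  { Functions := Func, Relations := Rel }

section Instances

variable (M : Type) [lang.Structure M]

instance : Zero M := ⟨Structure.funMap (L := lang) Func.zero ![]⟩
instance : One M := ⟨Structure.funMap (L := lang) Func.one ![]⟩
instance : Add M := ⟨fun x y => Structure.funMap (L := lang) Func.add ![x, y]⟩
instance : Mul M := ⟨fun x y => Structure.funMap (L := lang) Func.mul ![x, y]⟩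
instance : LT M := ⟨fun x y => Structure.RelMap (L := lang) Rel.lt ![x, y]⟩
instance : LE M := ⟨fun x y => x < y ∨ x = y⟩

end Instances

/-- The numeral `n` in a model. -/
def numM (M : Type) [lang.Structure M] : ℕ → M
  | 0 => 0
  | n + 1 => numM M n + 1

/-- `b` is nonstandard (greater than every numeral). -/
def Nonstd {M : Type} [lang.Structure M] (b : M) : Prop := ∀ n : ℕ, numM M n < b

/-- The atomic formula `t < u`. -/
def ltFm {α : Type} {n : ℕ} (t u : lang.Term (α ⊕ Fin n)) : lang.BoundedFormula α n :=
  BoundedFormula.rel (Rel.lt : lang.Relations 2) ![t, u]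

/-- Δ₀ formulas: built from atomic formulas by boolean connectives and
bounded universal quantification (this generates, up to logical equivalence,
the usual class of bounded formulas). -/
inductive IsDelta0 {α : Type} : ∀ n : ℕ, lang.BoundedFormula α n → Prop
  | falsum (n : ℕ) : IsDelta0 n BoundedFormula.falsum
  | equal (n : ℕ) (t u : lang.Term (α ⊕ Fin n)) : IsDelta0 n (BoundedFormula.equal t u)
  | rel (n l : ℕ) (R : lang.Relations l) (ts : Fin l → lang.Term (α ⊕ Fin n)) :
      IsDelta0 n (BoundedFormula.rel R ts)
  | imp (n : ℕ) {φ ψ : lang.BoundedFormula α n} :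
      IsDelta0 n φ → IsDelta0 n ψ → IsDelta0 n (φ.imp ψ)
  | bdAll (n : ℕ) (t : lang.Term (α ⊕ Fin n)) {φ : lang.BoundedFormula α (n + 1)} :
      IsDelta0 (n + 1) φ →
      IsDelta0 n
        (BoundedFormula.all ((ltFm (Term.var (Sum.inr (Fin.last n))) (t.liftAt 1 n)).imp φ))

mutual
  /-- Σ_m formulas. -/
  inductive SigmaFm {α : Type} : ℕ → ∀ n : ℕ, lang.BoundedFormula α n → Prop
    | delta0 (m n : ℕ) {φ : lang.BoundedFormula α n} : IsDelta0 n φ → SigmaFm m n φ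
    | ofPi (m n : ℕ) {φ : lang.BoundedFormula α n} : PiFm m n φ → SigmaFm (m + 1) n φ
    | ex (m n : ℕ) {φ : lang.BoundedFormula α (n + 1)} :
        SigmaFm (m + 1) (n + 1) φ → SigmaFm (m + 1) n φ.ex
  /-- Π_m formulas. -/
  inductive PiFm {α : Type} : ℕ → ∀ n : ℕ, lang.BoundedFormula α n → Prop
    | delta0 (m n : ℕ) {φ : lang.BoundedFormula α n} : IsDelta0 n φ → PiFm m n φ
    | ofSigma (m n : ℕ) {φ : lang.BoundedFormula α n} : SigmaFm m n φ → PiFm (m + 1) n φ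
    | all (m n : ℕ) {φ : lang.BoundedFormula α (n + 1)} :
        PiFm (m + 1) (n + 1) φ → PiFm (m + 1) n φ.all
end

/-- A `k`-ary relation on `M` is Σ_m-definable (with parameters from `M`). -/
def IsSigmaDef (m : ℕ) (M : Type) [lang.Structure M] {k : ℕ} (R : (Fin k → M) → Prop) : Prop :=
  ∃ (p : ℕ) (φ : lang.BoundedFormula (Fin k ⊕ Fin p) 0) (w : Fin p → M),
    SigmaFm m 0 φ ∧ ∀ v : Fin k → M, R v ↔ φ.Realize (Sum.elim v w) finZeroElim

/-- A subset of `M` is Σ_m-definable with parameters. -/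
def SigmaDef1 (m : ℕ) (M : Type) [lang.Structure M] (A : Set M) : Prop :=
  IsSigmaDef m M (k := 1) fun v => v 0 ∈ A

/-- A binary relation on `M` is Σ_m-definable with parameters. -/
def SigmaDef2 (m : ℕ) (M : Type) [lang.Structure M] (R : M → M → Prop) : Prop :=
  IsSigmaDef m M (k := 2) fun v => R (v 0) (v 1)

/-- A ternary relation on `M` is Σ_m-definable with parameters. -/
def SigmaDef3 (m : ℕ) (M : Type) [lang.Structure M] (R : M → M → M → Prop) : Prop :=
  IsSigmaDef m M (k := 3) fun v => R (v 0) (v 1) (v 2)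

/-- `M` is a model of PA⁻ (the nonnegative part of a discretely ordered
commutative semiring). -/
structure PAm (M : Type) [lang.Structure M] : Prop where
  add_assoc : ∀ x y z : M, x + y + z = x + (y + z)
  add_comm : ∀ x y : M, x + y = y + x
  mul_assoc : ∀ x y z : M, x * y * z = x * (y * z)
  mul_comm : ∀ x y : M, x * y = y * x
  ldistrib : ∀ x y z : M, x * (y + z) = x * y + x * z
  add_zero : ∀ x : M, x + 0 = x
  mul_zero : ∀ x : M, x * 0 = 0
  mul_one : ∀ x : M, x * 1 = x
  lt_trans : ∀ x y z : M, x < y → y < z → x < z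
  lt_irrefl : ∀ x : M, ¬x < x
  lt_total : ∀ x y : M, x < y ∨ x = y ∨ y < x
  add_lt_add : ∀ x y z : M, x < y → x + z < y + z
  mul_lt_mul : ∀ x y z : M, x < y → 0 < z → x * z < y * z
  sub_exists : ∀ x y : M, x < y → ∃ z, x + z = y
  zero_lt_one : (0 : M) < 1
  discrete : ∀ x : M, 0 < x → (1 : M) ≤ x
  zero_le : ∀ x : M, (0 : M) ≤ x

/-- `M` satisfies the Σ_m-induction scheme (with parameters). -/
def ISig (m : ℕ) (M : Type) [lang.Structure M] : Prop :=
  ∀ A : Set M, SigmaDef1 m M A → (0 : M) ∈ A → (∀ x, x ∈ A → x + 1 ∈ A) → ∀ x, x ∈ A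

/-- `M` satisfies the Σ_m-collection (bounding) scheme (with parameters). -/
def BSig (m : ℕ) (M : Type) [lang.Structure M] : Prop :=
  ∀ R : M → M → Prop, SigmaDef2 m M R → ∀ a : M,
    (∀ x, x < a → ∃ y, R x y) → ∃ b, ∀ x, x < a → ∃ y, y < b ∧ R x y

section Coding

variable {M : Type} [lang.Structure M]

/-- `z` is the Cantor pair `⟨x, y⟩`: `2z = (x+y)(x+y+1) + 2y`. -/
def IsPairC (z x y : M) : Prop := z + z = (x + y) * (x + y + 1) + (y + y)

/-- Gödel's β-function: `x = a mod ((i+1)·b + 1)`. -/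
def BetaC (a b i x : M) : Prop :=
  x < (i + 1) * b + 1 ∧ ∃ q, a = q * ((i + 1) * b + 1) + x

/-- The sequence coded by `s` (via a Cantor pair of β-function data) has value `x`
at place `i`. -/
def SeqAt (s i x : M) : Prop := ∃ a b, IsPairC s a b ∧ BetaC a b i x

/-- `c` codes the M-finite set `X` of cardinality `card`: `c = ⟨card, s⟩` where `s`
codes the strictly increasing enumeration of `X` of length `card`. -/
def CodesFinset (c : M) (X : Set M) (card : M) : Prop :=
  ∃ s, IsPairC c card s ∧
    (∀ i, i < card → ∃ x, x ∈ X ∧ SeqAt s i x) ∧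
    (∀ i j x y, i < j → j < card → SeqAt s i x → SeqAt s j y → x < y) ∧
    (∀ x, x ∈ X ↔ ∃ i, i < card ∧ SeqAt s i x)

/-- `X` is an M-finite (coded) set. -/
def MFinite (X : Set M) : Prop := ∃ c card : M, CodesFinset c X card

/-- `d` codes an `e`-element subset `D` of `[0, y)`, i.e. an element of `[y]^e`. -/
def CodesTupleIn (d e y : M) (D : Set M) : Prop :=
  CodesFinset d D e ∧ ∀ z ∈ D, z < y

/-- `f` codes a (finite) function defined on all of `[0, a)`. -/
def CodesFunOn (f a : M) : Prop :=
  ∀ x, x < a → (∃ y, SeqAt f x y) ∧ ∀ y y', SeqAt f x y → SeqAt f x y' → y = y'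

/-- `X` is an M-coded subset of `[0, a)`. -/
def MCodedSubset (a : M) (X : Set M) : Prop :=
  MFinite X ∧ ∀ x ∈ X, x < a

end Coding

/-- An `M`-ultrafilter on `a`: an ultrafilter of the Boolean algebra of
M-finite subsets of `[0, a)`. -/
structure MUltra (M : Type) [lang.Structure M] (a : M) where
  sets : Set (Set M)
  mem_coded : ∀ X ∈ sets, MCodedSubset a X
  univ_mem : {x : M | x < a} ∈ sets
  superset_mem : ∀ X Y : Set M, X ∈ sets → MCodedSubset a Y → X ⊆ Y → Y ∈ sets
  inter_mem : ∀ X Y : Set M, X ∈ sets → Y ∈ sets → X ∩ Y ∈ sets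
  empty_not_mem : (∅ : Set M) ∉ sets
  ultra : ∀ X : Set M, MCodedSubset a X → X ∈ sets ∨ {x : M | x < a ∧ x ∉ X} ∈ sets

section Principles

variable (M : Type) [lang.Structure M]

/-- `F` is (the graph of) a Σ_m-definable injection from `[0, y)` into `[0, x)`. -/
def SigmaInjRel (m : ℕ) (F : M → M → Prop) (y x : M) : Prop :=
  SigmaDef2 m M F ∧
    (∀ u, u < y → ∃ v, v < x ∧ F u v) ∧
    (∀ u v v', u < y → F u v → F u v' → v = v') ∧
    (∀ u u' v, u < y → u' < y → F u v → F u' v → u = u')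

/-- There exists a Σ_m-definable injection from `[0, y)` into `[0, x)`. -/
def ExSigmaInj (m : ℕ) (y x : M) : Prop := ∃ F : M → M → Prop, SigmaInjRel M m F y x

/-- There exists a Σ_m-definable injection from all of `M` into `[0, a)`. -/
def SigmaInjWhole (m : ℕ) (a : M) : Prop :=
  ∃ F : M → M → Prop, SigmaDef2 m M F ∧
    (∀ u, ∃ v, v < a ∧ F u v) ∧
    (∀ u v v', F u v → F u v' → v = v') ∧
    (∀ u u' v, F u v → F u' v → u = u')

/-- CARD(Σ_m): no Σ_m-definable multivalued map sends `M` injectively below `a`. -/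
def CARD (m : ℕ) : Prop :=
  ∀ F : M → M → Prop, SigmaDef2 m M F → ∀ a : M,
    (∀ x, ∃ y, y < a ∧ F x y) →
      ∃ x0 x1 y, x0 ≠ x1 ∧ y < a ∧ F x0 y ∧ F x1 y

/-- GPHP(Σ_m): for every `x` there is `y` with no Σ_m-definable injection of
`[0,y)` into `[0,x)`. -/
def GPHP (m : ℕ) : Prop := ∀ x : M, ∃ y : M, ¬ExSigmaInj M m y x

/-- WPHP(Σ_m): for `x > 0` there is no Σ_m-definable injection of `[0,2x)` into `[0,x)`. -/
def WPHP (m : ℕ) : Prop := ∀ x : M, 0 < x → ¬ExSigmaInj M m (x + x) x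

/-- `C` is a Σ_m-definable `k`-coloring of `[y]^e` (acting on codes of
`e`-element subsets of `[0,y)`, independently of the chosen code). -/
def IsColoring (m : ℕ) (e y k : M) (C : M → M → Prop) : Prop :=
  SigmaDef2 m M C ∧
    (∀ d D, CodesTupleIn d e y D → ∃ i, i < k ∧ C d i) ∧
    (∀ d d' D i i', CodesTupleIn d e y D → CodesTupleIn d' e y D → C d i → C d' i' → i = i')

/-- FRT^e_k(Σ_m): every Σ_m-definable `k`-coloring of some `[y]^e` has an
M-finite homogeneous set of cardinality `x`, for every `x`. -/
def FRT (m : ℕ) (e k : M) : Prop :=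
  ∀ x : M, ∃ y : M, ∀ C : M → M → Prop, IsColoring M m e y k C →
    ∃ (c : M) (H : Set M), CodesFinset c H x ∧ (∀ z ∈ H, z < y) ∧
      ∃ i, ∀ d D, CodesFinset d D e → D ⊆ H → C d i

/-- fairFRT^e_k(Σ_m): the homogeneous set is required to be given as the range of a
Σ_m-definable injection from `[0,x)` into `[0,y)`. -/
def FairFRT (m : ℕ) (e k : M) : Prop :=
  ∀ x : M, ∃ y : M, ∀ C : M → M → Prop, IsColoring M m e y k C →
    ∃ H : M → M → Prop, SigmaInjRel M m H x y ∧
      ∃ i, ∀ d D, CodesFinset d D e → (∀ z ∈ D, ∃ u, u < x ∧ H u z) → C d i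

/-- `C` is a Σ_m-definable `k`-coloring of `[0, y)`. -/
def IsColoring1 (m : ℕ) (y k : M) (C : M → M → Prop) : Prop :=
  SigmaDef2 m M C ∧
    (∀ z, z < y → ∃ i, i < k ∧ C z i) ∧
    (∀ z i i', z < y → C z i → C z i' → i = i')

/-- FRT¹_k(Σ_m): every Σ_m-definable `k`-coloring of some `[0,y)` has an M-finite
homogeneous set of cardinality `x`, for every `x`. -/
def FRT1 (m : ℕ) (k : M) : Prop :=
  ∀ x : M, ∃ y : M, ∀ C : M → M → Prop, IsColoring1 M m y k C →
    ∃ (c : M) (H : Set M), CodesFinset c H x ∧ (∀ z ∈ H, z < y) ∧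
      ∃ i, ∀ z ∈ H, C z i

/-- fairFRT¹_k(Σ_m). -/
def FairFRT1 (m : ℕ) (k : M) : Prop :=
  ∀ x : M, ∃ y : M, ∀ C : M → M → Prop, IsColoring1 M m y k C →
    ∃ H : M → M → Prop, SigmaInjRel M m H x y ∧
      ∃ i, ∀ u v, u < x → H u v → C v i

end Principles

section Approx

variable {M : Type} [lang.Structure M]

/-- `f` is (the graph of) a partial function. -/
def IsPartialFun (f : M → M → Prop) : Prop := ∀ x y y', f x y → f x y' → y = y'

/-- `s` codes an approximation to the partial function `f` of length `b`. -/
def IsApprox (f : M → M → Prop) (s b : M) : Prop :=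
  (∀ i, i < b → ∃ v, SeqAt s i v) ∧
    (∀ i u v x y, i + 1 < b → SeqAt s i u → SeqAt s (i + 1) v → x ≤ u → f x y → y ≤ v)

/-- `s` codes a `g`-stretched approximation to the partial function `f` of length `b`. -/
def IsStretchedApprox (f g : M → M → Prop) (s b : M) : Prop :=
  (∀ i, i < b → ∃ v, SeqAt s i v) ∧
    (∀ i u w v x y, i + 1 < b → SeqAt s i u → g u w → SeqAt s (i + 1) v →
      x ≤ w → f x y → y ≤ v)

/-- The eventual (limit) value of `fun s => h s ·` is `x`. -/
def EvLim (h : M → M → Prop) (x : M) : Prop := ∃ s : M, ∀ t, s < t → h t x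

end Approx

/-- PΣ_m: every partial Σ_m-definable function admits approximations of every length. -/
def PSig (m : ℕ) (M : Type) [lang.Structure M] : Prop :=
  ∀ f : M → M → Prop, SigmaDef2 m M f → IsPartialFun f → ∀ b : M, ∃ s, IsApprox f s b

section Extensions

variable (M N : Type) [lang.Structure M] [lang.Structure N]

/-- `g : M → N` is Σ_m-elementary: Σ_m formulas with parameters from `M` transfer. -/
def SigmaElem (m : ℕ) (g : M → N) : Prop :=
  ∀ (p : ℕ) (φ : lang.BoundedFormula (Fin p) 0), SigmaFm m 0 φ →
    ∀ v : Fin p → M, (φ.Realize v finZeroElim ↔ φ.Realize (g ∘ v) finZeroElim)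

/-- The extension `g : M → N` is cofinal. -/
def Cofinal (g : M → N) : Prop := ∀ z : N, ∃ x : M, z ≤ g x

/-- `[0,a]^M = [0,a]^N`: every element of `N` below `g a` comes from `M`. -/
def SameBelow (g : M → N) (a : M) : Prop := ∀ z : N, z ≤ g a → ∃ x : M, g x = z

end Extensions

section Ramsey

variable {M : Type} [lang.Structure M]

/-- `f` is an M-coded `k`-coloring of `[y]^e` (assigning colors to codes of
`e`-subsets of `[0,y)`, independently of the code). -/
def CodedColoring (f e y k : M) : Prop :=
  (∀ d D, CodesTupleIn d e y D → ∃ i, i < k ∧ SeqAt f d i) ∧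
    (∀ d d' D i i', CodesTupleIn d e y D → CodesTupleIn d' e y D →
      SeqAt f d i → SeqAt f d' i' → i = i')

/-- The coded coloring `f` of `[y]^e` has an M-coded homogeneous set of cardinality `x`. -/
def CodedHomog (f e y x : M) : Prop :=
  ∃ (c : M) (H : Set M), CodesFinset c H x ∧ (∀ z ∈ H, z < y) ∧
    ∃ i, ∀ d D, CodesFinset d D e → D ⊆ H → SeqAt f d i

/-- `y = r(x, e, k)`: `y` is the least size guaranteeing coded homogeneous sets of
cardinality `x` for all coded `k`-colorings of `e`-subsets. -/
def IsRamsey (x e k y : M) : Prop :=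
  (∀ f, CodedColoring f e y k → CodedHomog f e y x) ∧
    (∀ y', y' < y → ∃ f, CodedColoring f e y' k ∧ ¬CodedHomog f e y' x)

/-- `y = r^(b)(x, e, k)`: the `b`-th iterate of the Ramsey function inside `M`. -/
def IterRamsey (x e k b y : M) : Prop :=
  ∃ s : M, SeqAt s 0 x ∧ SeqAt s b y ∧ (∀ i, i ≤ b → ∃ u, SeqAt s i u) ∧
    (∀ i u v, i < b → SeqAt s i u → SeqAt s (i + 1) v → IsRamsey u e k v)

end Ramsey

end ArithFC

/-!
A model of IΣ₁ codes finite sets by binary expansions, and it proves the finite Ramsey theorem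
for colourings `col` given by Σ₁-definable functions on these codes. A set `A` is thinned out `e`
times, each time by an Erdős–Rado step, keeping a set `w` such that the colour of `r ∪ v`, for
`r < v` in `A` and `|v| = t`, equals that of `r ∪ w`; for `t = e` and `r = ∅` this is homogeneity.
The step adds points one by one to `S ⊆ A` while shrinking a reservoir `P` above `S`. In a
reservoir of size `c`, some subset of size at least `c / k ^ 2 ^ |S|` makes all `2 ^ |S|` colourings
`p ↦ col (u ∪ {a, p} ∪ w)`, `u ⊆ S`, constant at once, by induction along the subsets of `S`, so an
exponential tower bounds the size needed.

A Σₙ₊₁-definable colouring of `[y]^e` is M-finite in the presence of BΣₙ₊₁: collection bounds the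
witnesses of its Σₙ₊₁ definition, after which it has a Σₙ graph, and IΣₙ codes it. The colouring
thereby becomes Σ₁-definable, with the code as a parameter, for every `n`.
-/

namespace ArithFC

/-! ### Models of PA⁻ -/

/-- `PAm` as a class, so that models of PA⁻ carry the algebraic and order structure of Mathlib. -/
class ModelPAm (M : Type) [lang.Structure M] : Prop extends PAm M

namespace ModelPAm

variable {M : Type} [lang.Structure M] [ModelPAm M]

instance : CommSemiring M where
  nsmul := nsmulRec
  npow := npowRec
  add_assoc := toPAm.add_assoc
  add_comm := toPAm.add_comm
  add_zero := toPAm.add_zero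
  zero_add x := by rw [toPAm.add_comm, toPAm.add_zero]
  mul_assoc := toPAm.mul_assoc
  mul_comm := toPAm.mul_comm
  mul_one := toPAm.mul_one
  one_mul x := by rw [toPAm.mul_comm, toPAm.mul_one]
  mul_zero := toPAm.mul_zero
  zero_mul x := by rw [toPAm.mul_comm, toPAm.mul_zero]
  left_distrib := toPAm.ldistrib
  right_distrib x y z := by
    rw [toPAm.mul_comm, toPAm.ldistrib, toPAm.mul_comm z x, toPAm.mul_comm z y]

noncomputable instance : LinearOrder M where
  le_refl x := Or.inr rfl
  le_trans x y z := by
    rintro (hxy | rfl) (hyz | rfl)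
    · exact Or.inl (toPAm.lt_trans _ _ _ hxy hyz)
    · exact Or.inl hxy
    · exact Or.inl hyz
    · exact Or.inr rfl
  le_antisymm x y := by
    rintro (hxy | rfl) (hyx | hyx)
    · exact absurd (toPAm.lt_trans _ _ _ hxy hyx) (toPAm.lt_irrefl _)
    · exact hyx.symm
    · rfl
    · rfl
  lt_iff_le_not_ge x y := by
    constructor
    · refine fun hxy => ⟨Or.inl hxy, ?_⟩
      rintro (hyx | rfl)
      · exact toPAm.lt_irrefl _ (toPAm.lt_trans _ _ _ hxy hyx)
      · exact toPAm.lt_irrefl _ hxy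
    · rintro ⟨hxy | rfl, hyx⟩
      · exact hxy
      · exact absurd (Or.inr rfl) hyx
  le_total x y := by
    rcases toPAm.lt_total x y with h | h | h
    · exact Or.inl (Or.inl h)
    · exact Or.inl (Or.inr h)
    · exact Or.inr (Or.inl h)
  toDecidableLE := Classical.decRel _

instance : IsOrderedCancelAddMonoid M where
  add_le_add_left x y h z := by
    rcases h with h | rfl
    · exact Or.inl (toPAm.add_lt_add _ _ _ h)
    · exact le_rfl
  le_of_add_le_add_left x y z h := by
    by_contra! hzy
    have := toPAm.add_lt_add _ _ x hzy
    rw [add_comm z x, add_comm y x] at this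
    exact this.not_ge h

instance : IsStrictOrderedRing M where
  zero_le_one := toPAm.zero_le 1
  exists_pair_ne := ⟨0, 1, ne_of_lt (toPAm.zero_lt_one : (0 : M) < 1)⟩
  mul_lt_mul_of_pos_left x hx y z h := by
    have := toPAm.mul_lt_mul _ _ _ h hx
    rwa [mul_comm y, mul_comm z] at this
  mul_lt_mul_of_pos_right x hx y z h := toPAm.mul_lt_mul _ _ _ h hx

instance : CanonicallyOrderedAdd M where
  exists_add_of_le {x y} h := by
    rcases h with h | rfl
    · obtain ⟨z, hz⟩ := toPAm.sub_exists _ _ h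
      exact ⟨z, hz.symm⟩
    · exact ⟨0, (add_zero _).symm⟩
  le_self_add x y := le_add_of_nonneg_right (toPAm.zero_le y)
  le_add_self x y := le_add_of_nonneg_left (toPAm.zero_le y)

noncomputable instance : SuccAddOrder M :=
  { SuccOrder.ofSuccLeIff (fun x : M => x + 1) fun {x y} => by
      refine ⟨(lt_add_one x).trans_le, fun h => ?_⟩
      obtain ⟨z, hz, rfl⟩ := exists_pos_add_of_lt' h
      exact add_le_add_right (toPAm.discrete z hz) x with
    succ_eq_add_one := fun _ => rfl }

theorem exists_eq_add_one {x : M} (h : x ≠ 0) : ∃ y, x = y + 1 := by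
  obtain ⟨y, rfl⟩ := exists_add_of_le (toPAm.discrete x (pos_of_ne_zero h))
  exact ⟨y, add_comm _ _⟩

end ModelPAm

/-! ### Substitution of terms -/

section Substitution

variable {L : Language} {α β N : Type} [L.Structure N]

theorem realize_liftAt_snoc {l : ℕ} (t : L.Term (β ⊕ Fin l)) (v : β → N) (xs : Fin l → N) (y : N) :
    (t.liftAt 1 l).realize (Sum.elim v (Fin.snoc xs y : Fin (l + 1) → N)) =
      t.realize (Sum.elim v xs) := by
  rw [Term.realize_liftAt]
  congr 1
  funext i
  rcases i with a | i
  · simp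
  · have : Fin.castAdd 1 i = i.castSucc := rfl
    simp [this]

/-- The assignment `σ` of terms to variables, extended below a quantifier: the newly bound
variable is left fixed. -/
def substUp {j l : ℕ} (σ : α ⊕ Fin j → L.Term (β ⊕ Fin l)) :
    α ⊕ Fin (j + 1) → L.Term (β ⊕ Fin (l + 1)) :=
  Sum.elim (fun a => (σ (Sum.inl a)).liftAt 1 l)
    (Fin.snoc (fun i => (σ (Sum.inr i)).liftAt 1 l) (Term.var (Sum.inr (Fin.last l))))

/-- Simultaneous substitution of terms for all free and de Bruijn variables of a formula. Unlike
`BoundedFormula.subst` it may change the number of de Bruijn variables. -/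
def substAll : ∀ {j l : ℕ}, L.BoundedFormula α j → (α ⊕ Fin j → L.Term (β ⊕ Fin l)) →
    L.BoundedFormula β l
  | _, _, .falsum, _ => .falsum
  | _, _, .equal t u, σ => .equal (t.subst σ) (u.subst σ)
  | _, _, .rel R ts, σ => .rel R fun i => (ts i).subst σ
  | _, _, .imp φ ψ, σ => .imp (substAll φ σ) (substAll ψ σ)
  | _, _, .all φ, σ => .all (substAll φ (substUp σ))

theorem realize_substUp {j l : ℕ} (σ : α ⊕ Fin j → L.Term (β ⊕ Fin l)) (v : β → N)
    (xs : Fin l → N) (y : N) (i : α ⊕ Fin (j + 1)) :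
    (substUp σ i).realize (Sum.elim v (Fin.snoc xs y : Fin (l + 1) → N)) =
      Sum.elim (fun a => (σ (Sum.inl a)).realize (Sum.elim v xs))
        (Fin.snoc (fun i => (σ (Sum.inr i)).realize (Sum.elim v xs)) y : Fin (j + 1) → N) i := by
  rcases i with a | i
  · exact realize_liftAt_snoc _ _ _ _
  · refine Fin.lastCases ?_ (fun i => ?_) i
    · simp [substUp]
    · simp [substUp, realize_liftAt_snoc]

theorem realize_substAll {j l : ℕ} (φ : L.BoundedFormula α j) (σ : α ⊕ Fin j → L.Term (β ⊕ Fin l))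
    (v : β → N) (xs : Fin l → N) :
    (substAll φ σ).Realize v xs ↔
      φ.Realize (fun a => (σ (Sum.inl a)).realize (Sum.elim v xs))
        (fun i => (σ (Sum.inr i)).realize (Sum.elim v xs)) := by
  have elim_realize {j l : ℕ} (σ : α ⊕ Fin j → L.Term (β ⊕ Fin l)) (xs : Fin l → N) :
      (fun i => (σ i).realize (Sum.elim v xs)) =
        Sum.elim (fun a => (σ (Sum.inl a)).realize (Sum.elim v xs))
          (fun i => (σ (Sum.inr i)).realize (Sum.elim v xs)) := by
    funext i; cases i <;> rfl
  induction φ generalizing l with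
  | falsum => rfl
  | equal t u => simp only [substAll, BoundedFormula.Realize, Term.realize_subst, elim_realize]
  | rel R ts => simp only [substAll, BoundedFormula.Realize, Term.realize_subst, elim_realize]
  | imp φ ψ hφ hψ => simp only [substAll, BoundedFormula.Realize, hφ, hψ]
  | all φ hφ =>
    simp only [substAll, BoundedFormula.Realize, hφ, realize_substUp, Sum.elim_inl, Sum.elim_inr]

theorem subst_liftAt {j l : ℕ} (t : L.Term (α ⊕ Fin j)) (σ : α ⊕ Fin j → L.Term (β ⊕ Fin l)) :
    (t.liftAt 1 j).subst (substUp σ) = (t.subst σ).liftAt 1 l := by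
  induction t with
  | var i =>
    rcases i with a | i
    · rfl
    · have : Fin.castAdd 1 i = i.castSucc := rfl
      simp [Term.liftAt, Term.relabel, Term.subst, substUp, this]
  | func f ts ih =>
    simp only [Term.liftAt, Term.relabel, Term.subst] at ih ⊢
    exact congrArg _ (funext ih)

end Substitution

/-! ### The arithmetic hierarchy -/

section Hierarchy

variable {α β : Type}

theorem IsDelta0.substAll {j : ℕ} {φ : lang.BoundedFormula α j} (h : IsDelta0 j φ) {l : ℕ}
    (σ : α ⊕ Fin j → lang.Term (β ⊕ Fin l)) : IsDelta0 l (substAll φ σ) := by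
  induction h generalizing l with
  | falsum => exact .falsum l
  | equal => exact .equal ..
  | rel => exact .rel ..
  | imp _ _ _ hφ hψ => exact .imp l (hφ σ) (hψ σ)
  | bdAll j t _ hφ =>
    have hlt : ArithFC.substAll (ltFm (Term.var (Sum.inr (Fin.last j))) (t.liftAt 1 j))
        (substUp σ) = ltFm (Term.var (Sum.inr (Fin.last l))) ((t.subst σ).liftAt 1 l) := by
      refine congrArg (BoundedFormula.rel _) (funext fun i => ?_)
      fin_cases i
      · simp [Term.subst, substUp]
      · exact subst_liftAt t σ
    change IsDelta0 l (.all (.imp (ArithFC.substAll _ _) (ArithFC.substAll _ _)))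
    rw [hlt]
    exact .bdAll l (t.subst σ) (hφ _)

mutual

theorem SigmaFm.substAll {m j : ℕ} {φ : lang.BoundedFormula α j} (h : SigmaFm m j φ) {l : ℕ}
    (σ : α ⊕ Fin j → lang.Term (β ⊕ Fin l)) : SigmaFm m l (substAll φ σ) :=
  match h with
  | .delta0 m _ h => .delta0 m l (h.substAll σ)
  | .ofPi m _ h => .ofPi m l (h.substAll σ)
  | .ex m _ h => .ex m l (h.substAll (substUp σ))

theorem PiFm.substAll {m j : ℕ} {φ : lang.BoundedFormula α j} (h : PiFm m j φ) {l : ℕ}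
    (σ : α ⊕ Fin j → lang.Term (β ⊕ Fin l)) : PiFm m l (substAll φ σ) :=
  match h with
  | .delta0 m _ h => .delta0 m l (h.substAll σ)
  | .ofSigma m _ h => .ofSigma m l (h.substAll σ)
  | .all m _ h => .all m l (h.substAll (substUp σ))

end

mutual

theorem SigmaFm.succ {m j : ℕ} {φ : lang.BoundedFormula α j} (h : SigmaFm m j φ) :
    SigmaFm (m + 1) j φ :=
  match h with
  | .delta0 m _ h => .delta0 (m + 1) j h
  | .ofPi m _ h => .ofPi (m + 1) j h.succ
  | .ex m _ h => .ex (m + 1) j h.succ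

theorem PiFm.succ {m j : ℕ} {φ : lang.BoundedFormula α j} (h : PiFm m j φ) :
    PiFm (m + 1) j φ :=
  match h with
  | .delta0 m _ h => .delta0 (m + 1) j h
  | .ofSigma m _ h => .ofSigma (m + 1) j h.succ
  | .all m _ h => .all (m + 1) j h.succ

end

theorem SigmaFm.mono {m m' j : ℕ} {φ : lang.BoundedFormula α j} (h : SigmaFm m j φ)
    (hm : m ≤ m') : SigmaFm m' j φ := by
  induction hm with
  | refl => exact h
  | step _ ih => exact ih.succ

mutual

theorem SigmaFm.exists_not {m j : ℕ} {φ : lang.BoundedFormula α j} (h : SigmaFm m j φ) :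
    ∃ ψ, PiFm m j ψ ∧ ∀ (N : Type) [lang.Structure N] (v : α → N) (xs : Fin j → N),
      ψ.Realize v xs ↔ ¬ φ.Realize v xs :=
  match h with
  | .delta0 m _ h => ⟨_, .delta0 m j (.imp j h (.falsum j)), fun _ _ _ _ => Iff.rfl⟩
  | .ofPi m _ h =>
    have ⟨ψ, hψ, e⟩ := h.exists_not
    ⟨ψ, .ofSigma m j hψ, e⟩
  | .ex m _ h =>
    have ⟨ψ, hψ, e⟩ := h.exists_not
    ⟨ψ.all, .all m j hψ, fun N _ v xs => by simp [e]⟩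

theorem PiFm.exists_not {m j : ℕ} {φ : lang.BoundedFormula α j} (h : PiFm m j φ) :
    ∃ ψ, SigmaFm m j ψ ∧ ∀ (N : Type) [lang.Structure N] (v : α → N) (xs : Fin j → N),
      ψ.Realize v xs ↔ ¬ φ.Realize v xs :=
  match h with
  | .delta0 m _ h => ⟨_, .delta0 m j (.imp j h (.falsum j)), fun _ _ _ _ => Iff.rfl⟩
  | .ofSigma m _ h =>
    have ⟨ψ, hψ, e⟩ := h.exists_not
    ⟨ψ, .ofPi m j hψ, e⟩
  | .all m _ h =>
    have ⟨ψ, hψ, e⟩ := h.exists_not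
    ⟨ψ.ex, .ex m j hψ, fun N _ v xs => by simp [e]⟩

end

variable {M : Type} [lang.Structure M] {m m' k : ℕ}

theorem IsSigmaDef.mono {R : (Fin k → M) → Prop} (h : IsSigmaDef m M R) (hm : m ≤ m') :
    IsSigmaDef m' M R := by
  obtain ⟨p, φ, w, hφ, e⟩ := h
  exact ⟨p, φ, w, hφ.mono hm, e⟩

theorem ISig.anti (h : ISig m' M) (hm : m ≤ m') : ISig m M := fun A hA => h A (hA.mono hm)

theorem BSig.anti (h : BSig m' M) (hm : m ≤ m') : BSig m M := fun R hR => h R (hR.mono hm)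

end Hierarchy

/-! ### Definability over contexts -/

/-- A context is a type whose elements are read as finite tuples from `M`, so that predicates on it
can be defined by formulas. The only contexts used are iterated products `(Unit × M) × ⋯ × M`. -/
class Context (M Γ : Type) where
  /-- the length of the tuples -/
  arity : ℕ
  /-- the tuple of an element -/
  get : Γ → Fin arity → M

instance (M : Type) : Context M Unit := ⟨0, fun _ => finZeroElim⟩

instance (M Γ : Type) [Context M Γ] : Context M (Γ × M) :=
  ⟨Context.arity M Γ + 1, fun p => Fin.snoc (α := fun _ => M) (Context.get p.1) p.2⟩

section Definability

variable (M : Type) [lang.Structure M] {Γ Δ : Type} [Context M Γ] [Context M Δ]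

/-- `R` is Σ_m-definable with parameters from `M`. -/
class IsSigma (m : ℕ) (R : Γ → Prop) : Prop where
  exists_formula : ∃ φ : lang.BoundedFormula M (Context.arity M Γ),
    SigmaFm m _ φ ∧ ∀ γ, R γ ↔ φ.Realize id (Context.get γ)

/-- `R` is Π_m-definable with parameters from `M`. -/
class IsPi (m : ℕ) (R : Γ → Prop) : Prop where
  exists_formula : ∃ φ : lang.BoundedFormula M (Context.arity M Γ),
    PiFm m _ φ ∧ ∀ γ, R γ ↔ φ.Realize id (Context.get γ)

variable {M}

/-- `f` is the value of a term with parameters from `M`. -/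
class IsTerm (f : Γ → M) : Prop where
  exists_term : ∃ t : lang.Term (M ⊕ Fin (Context.arity M Γ)),
    ∀ γ, f γ = t.realize (Sum.elim id (Context.get γ))

variable (M) in
/-- Every coordinate of the map `g` between contexts is the value of a term. -/
class IsTermMap (g : Γ → Δ) : Prop where
  isTerm : ∀ i : Fin (Context.arity M Δ), IsTerm (fun γ => Context.get (M := M) (g γ) i)

end Definability

section Terms

variable {M : Type} [lang.Structure M] {Γ Δ : Type} [Context M Γ] [Context M Δ]

instance IsTermMap.id : IsTermMap M (fun γ : Γ => γ) :=
  ⟨fun i => ⟨Term.var (Sum.inr i), fun _ => rfl⟩⟩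

instance IsTermMap.unit (g : Γ → Unit) : IsTermMap M g := ⟨fun i => i.elim0⟩

instance (priority := low) IsTermMap.const (δ : Δ) : IsTermMap M (fun _ : Γ => δ) :=
  ⟨fun i => ⟨Term.var (Sum.inl (Context.get δ i)), fun _ => rfl⟩⟩

instance IsTermMap.fst (g : Γ → Δ × M) [h : IsTermMap M g] : IsTermMap M (fun γ => (g γ).1) where
  isTerm i := by
    simpa [Context.get, Fin.snoc_castSucc (α := fun _ => M)] using h.isTerm i.castSucc

instance IsTerm.snd (g : Γ → Δ × M) [h : IsTermMap M g] : IsTerm (fun γ => (g γ).2) := by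
  simpa [Context.get, Fin.snoc_last (α := fun _ => M)] using h.isTerm (Fin.last _)

theorem IsTerm.snoc {j : ℕ} {g : Γ → Fin j → M} {f : Γ → M} (hg : ∀ i, IsTerm (fun γ => g γ i))
    (hf : IsTerm f) (i : Fin (j + 1)) :
    IsTerm (fun γ => (Fin.snoc (g γ) (f γ) : Fin (j + 1) → M) i) := by
  refine Fin.lastCases ?_ (fun i => ?_) i
  · simpa [Fin.snoc_last (α := fun _ => M)] using hf
  · simpa [Fin.snoc_castSucc (α := fun _ => M)] using hg i

instance (priority := low) IsTermMap.pair (g : Γ → Δ) (f : Γ → M) [h : IsTermMap M g]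
    [hf : IsTerm f] : IsTermMap M (fun γ => (g γ, f γ)) :=
  ⟨IsTerm.snoc h.isTerm hf⟩

instance IsTerm.const (c : M) : IsTerm (fun _ : Γ => c) := ⟨Term.var (Sum.inl c), fun _ => rfl⟩

instance IsTerm.add (f g : Γ → M) [hf : IsTerm f] [hg : IsTerm g] :
    IsTerm (fun γ => f γ + g γ) := by
  obtain ⟨t, ht⟩ := hf.exists_term
  obtain ⟨u, hu⟩ := hg.exists_term
  refine ⟨Term.func (Func.add : lang.Functions 2) ![t, u], fun γ => ?_⟩
  rw [ht, hu]
  exact congrArg _ (funext fun i => by fin_cases i <;> rfl)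

instance IsTerm.mul (f g : Γ → M) [hf : IsTerm f] [hg : IsTerm g] :
    IsTerm (fun γ => f γ * g γ) := by
  obtain ⟨t, ht⟩ := hf.exists_term
  obtain ⟨u, hu⟩ := hg.exists_term
  refine ⟨Term.func (Func.mul : lang.Functions 2) ![t, u], fun γ => ?_⟩
  rw [ht, hu]
  exact congrArg _ (funext fun i => by fin_cases i <;> rfl)

theorem IsTerm.comp_fst {f : Γ → M} (hf : IsTerm f) : IsTerm (fun p : Γ × M => f p.1) := by
  obtain ⟨t, ht⟩ := hf.exists_term
  exact ⟨t.liftAt 1 _, fun p => (ht p.1).trans (realize_liftAt_snoc t id _ _).symm⟩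

end Terms

section Formulas

variable {M : Type} [lang.Structure M] {Γ Δ : Type} [Context M Γ] [Context M Δ] {m m' j : ℕ}

theorem realize_ltFm {α : Type} (t u : lang.Term (α ⊕ Fin j)) (v : α → M) (xs : Fin j → M) :
    (ltFm t u).Realize v xs ↔ t.realize (Sum.elim v xs) < u.realize (Sum.elim v xs) := by
  change Structure.RelMap _ _ ↔ Structure.RelMap _ _
  exact iff_of_eq (congrArg _ (funext fun i => by fin_cases i <;> rfl))

theorem SigmaFm.isSigma {φ : lang.BoundedFormula M j} (hφ : SigmaFm m j φ) {g : Γ → Fin j → M}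
    (hg : ∀ i, IsTerm (fun γ => g γ i)) : IsSigma M m (fun γ => φ.Realize id (g γ)) := by
  choose σ hσ using fun i => (hg i).exists_term
  refine ⟨_, hφ.substAll (Sum.elim (fun a => Term.var (Sum.inl a)) σ), fun γ => ?_⟩
  rw [realize_substAll, funext fun i => hσ i γ]
  rfl

theorem PiFm.isPi {φ : lang.BoundedFormula M j} (hφ : PiFm m j φ) {g : Γ → Fin j → M}
    (hg : ∀ i, IsTerm (fun γ => g γ i)) : IsPi M m (fun γ => φ.Realize id (g γ)) := by
  choose σ hσ using fun i => (hg i).exists_term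
  refine ⟨_, hφ.substAll (Sum.elim (fun a => Term.var (Sum.inl a)) σ), fun γ => ?_⟩
  rw [realize_substAll, funext fun i => hσ i γ]
  rfl

theorem IsSigma.congr {R S : Γ → Prop} (h : IsSigma M m R) (e : ∀ γ, S γ ↔ R γ) : IsSigma M m S :=
  (funext fun γ => propext (e γ) : S = R) ▸ h

theorem IsPi.congr {R S : Γ → Prop} (h : IsPi M m R) (e : ∀ γ, S γ ↔ R γ) : IsPi M m S :=
  (funext fun γ => propext (e γ) : S = R) ▸ h

theorem IsSigma.comp {R : Δ → Prop} (h : IsSigma M m R) (g : Γ → Δ) [hg : IsTermMap M g] :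
    IsSigma M m (fun γ => R (g γ)) := by
  obtain ⟨φ, hφ, e⟩ := h
  exact (hφ.isSigma hg.isTerm).congr fun γ => e (g γ)

theorem IsPi.comp {R : Δ → Prop} (h : IsPi M m R) (g : Γ → Δ) [hg : IsTermMap M g] :
    IsPi M m (fun γ => R (g γ)) := by
  obtain ⟨φ, hφ, e⟩ := h
  exact (hφ.isPi hg.isTerm).congr fun γ => e (g γ)

instance IsSigma.not {R : Γ → Prop} [h : IsPi M m R] : IsSigma M m (fun γ => ¬ R γ) := by
  obtain ⟨φ, hφ, e⟩ := h
  obtain ⟨ψ, hψ, e'⟩ := hφ.exists_not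
  exact ⟨ψ, hψ, fun γ => (not_congr (e γ)).trans (e' M _ _).symm⟩

instance IsPi.not {R : Γ → Prop} [h : IsSigma M m R] : IsPi M m (fun γ => ¬ R γ) := by
  obtain ⟨φ, hφ, e⟩ := h
  obtain ⟨ψ, hψ, e'⟩ := hφ.exists_not
  exact ⟨ψ, hψ, fun γ => (not_congr (e γ)).trans (e' M _ _).symm⟩

theorem IsPi.of_not {R : Γ → Prop} (_ : IsSigma M m (fun γ => ¬ R γ)) : IsPi M m R :=
  IsPi.not.congr fun _ => not_not.symm

theorem IsSigma.of_not {R : Γ → Prop} (_ : IsPi M m (fun γ => ¬ R γ)) : IsSigma M m R :=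
  IsSigma.not.congr fun _ => not_not.symm

theorem IsSigma.mono {R : Γ → Prop} (h : IsSigma M m R) (hm : m ≤ m') : IsSigma M m' R := by
  obtain ⟨φ, hφ, e⟩ := h
  exact ⟨φ, hφ.mono hm, e⟩

theorem IsPi.isSigma_succ {R : Γ → Prop} (h : IsPi M m R) : IsSigma M (m + 1) R := by
  obtain ⟨φ, hφ, e⟩ := h
  exact ⟨φ, .ofPi m _ hφ, e⟩

theorem IsSigma.exists_isDelta0 {R : Γ → Prop} (h : IsSigma M 0 R) :
    ∃ φ : lang.BoundedFormula M _, IsDelta0 _ φ ∧ ∀ γ, R γ ↔ φ.Realize id (Context.get γ) := by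
  obtain ⟨φ, hφ, e⟩ := h
  cases hφ with
  | delta0 _ _ hφ => exact ⟨φ, hφ, e⟩

theorem IsSigma.isPi_of_zero {R : Γ → Prop} (h : IsSigma M 0 R) : IsPi M m R := by
  obtain ⟨φ, hφ, e⟩ := h.exists_isDelta0
  exact ⟨φ, .delta0 m _ hφ, e⟩

theorem IsPi.isSigma_of_zero {R : Γ → Prop} (h : IsPi M 0 R) : IsSigma M m R :=
  .of_not (IsSigma.not (h := h).isPi_of_zero)

theorem IsSigma.ex {R : Γ → M → Prop} (h : IsSigma M (m + 1) (fun p : Γ × M => R p.1 p.2)) :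
    IsSigma M (m + 1) (fun γ => ∃ x, R γ x) := by
  obtain ⟨φ, hφ, e⟩ := h
  refine ⟨φ.ex, .ex m _ hφ, fun γ => ?_⟩
  rw [BoundedFormula.realize_ex]
  exact exists_congr fun x => e (γ, x)

theorem IsSigma.termEq (f g : Γ → M) [hf : IsTerm f] [hg : IsTerm g] :
    IsSigma M m (fun γ => f γ = g γ) := by
  obtain ⟨t, ht⟩ := hf.exists_term
  obtain ⟨u, hu⟩ := hg.exists_term
  exact ⟨.equal t u, .delta0 m _ (.equal _ t u), fun γ => by rw [ht, hu]; rfl⟩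

theorem IsSigma.termLT (f g : Γ → M) [hf : IsTerm f] [hg : IsTerm g] :
    IsSigma M m (fun γ => f γ < g γ) := by
  obtain ⟨t, ht⟩ := hf.exists_term
  obtain ⟨u, hu⟩ := hg.exists_term
  exact ⟨ltFm t u, .delta0 m _ (.rel ..), fun γ => by rw [ht, hu, realize_ltFm]⟩

theorem IsSigma.induction {motive : ∀ {Γ : Type} [Context M Γ], (Γ → Prop) → Prop}
    (pi : ∀ {Γ : Type} [Context M Γ] (R : Γ → Prop), IsPi M m R → motive R)
    (ex : ∀ {Γ : Type} [Context M Γ] (R : Γ → M → Prop),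
      motive (fun p : Γ × M => R p.1 p.2) → motive (fun γ => ∃ x, R γ x))
    {R : Γ → Prop} (h : IsSigma M (m + 1) R) : motive R := by
  have realize {m' j : ℕ} {φ : lang.BoundedFormula M j} (hφ : SigmaFm m' j φ) (hm : m' = m + 1)
      {Γ : Type} [Context M Γ] (g : Γ → Fin j → M) (hg : ∀ i, IsTerm (fun γ => g γ i)) :
      motive (fun γ => φ.Realize id (g γ)) := by
    induction hφ using SigmaFm.rec (motive_2 := fun _ _ _ _ => True) generalizing Γ with
    | delta0 m' j hφ => exact pi _ ((PiFm.delta0 m j hφ).isPi hg)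
    | ofPi m' j hφ =>
      obtain rfl := Nat.succ_injective hm
      exact pi _ (hφ.isPi hg)
    | ex m' j _ ih =>
      simp only [BoundedFormula.realize_ex]
      exact ex _ (ih hm _ (IsTerm.snoc (fun i => (hg i).comp_fst) inferInstance))
    | _ => trivial
  obtain ⟨φ, hφ, e⟩ := h
  rw [show R = fun γ => φ.Realize id (Context.get γ) from funext fun γ => propext (e γ)]
  exact realize hφ rfl _ IsTermMap.id.isTerm

end Formulas

/-! ### Boolean connectives and bounded quantifiers -/

section Connectives

variable {M : Type} [lang.Structure M] {Γ : Type} [Context M Γ] {m : ℕ}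

theorem IsSigma.and_or_zero {R S : Γ → Prop} (hR : IsSigma M 0 R) (hS : IsSigma M 0 S) :
    IsSigma M 0 (fun γ => R γ ∧ S γ) ∧ IsSigma M 0 (fun γ => R γ ∨ S γ) := by
  obtain ⟨φ, hφ, eφ⟩ := hR.exists_isDelta0
  obtain ⟨ψ, hψ, eψ⟩ := hS.exists_isDelta0
  constructor
  · refine ⟨φ ⊓ ψ, .delta0 0 _ (.imp _ (.imp _ hφ (.imp _ hψ (.falsum _))) (.falsum _)),
      fun γ => ?_⟩
    rw [BoundedFormula.realize_inf, eφ, eψ]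
  · refine ⟨φ ⊔ ψ, .delta0 0 _ (.imp _ (.imp _ hφ (.falsum _)) hψ), fun γ => ?_⟩
    rw [BoundedFormula.realize_sup, eφ, eψ]

theorem IsSigma.and_or {R S : Γ → Prop} (hR : IsSigma M m R) (hS : IsSigma M m S) :
    IsSigma M m (fun γ => R γ ∧ S γ) ∧ IsSigma M m (fun γ => R γ ∨ S γ) := by
  induction m generalizing Γ with
  | zero => exact hR.and_or_zero hS
  | succ m ih =>
    have pi_pi {Γ : Type} [Context M Γ] {R S : Γ → Prop} (hR : IsPi M m R) (hS : IsPi M m S) :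
        IsPi M m (fun γ => R γ ∧ S γ) ∧ IsPi M m (fun γ => R γ ∨ S γ) := by
      have h := ih (IsSigma.not (h := hR)) (IsSigma.not (h := hS))
      exact ⟨.of_not (h.2.congr fun _ => not_and_or), .of_not (h.1.congr fun _ => not_or)⟩
    have sigma_pi {Γ : Type} [Context M Γ] {R S : Γ → Prop} (hR : IsSigma M (m + 1) R)
        (hS : IsPi M m S) :
        IsSigma M (m + 1) (fun γ => R γ ∧ S γ) ∧ IsSigma M (m + 1) (fun γ => R γ ∨ S γ) := by
      refine hR.induction (motive := fun {Γ} _ R => ∀ {S : Γ → Prop}, IsPi M m S →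
        IsSigma M (m + 1) (fun γ => R γ ∧ S γ) ∧ IsSigma M (m + 1) (fun γ => R γ ∨ S γ)) ?_ ?_ hS
      · exact fun R hR S hS => ⟨(pi_pi hR hS).1.isSigma_succ, (pi_pi hR hS).2.isSigma_succ⟩
      · intro Γ _ R ih S hS
        have h := ih (hS.comp Prod.fst)
        exact ⟨h.1.ex.congr fun _ => exists_and_right.symm,
          (IsSigma.ex (R := fun γ x => R γ x ∨ S γ) h.2).congr fun _ => by
            rw [exists_or, exists_const]⟩
    refine hS.induction (motive := fun {Γ} _ S => ∀ {R : Γ → Prop}, IsSigma M (m + 1) R →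
      IsSigma M (m + 1) (fun γ => R γ ∧ S γ) ∧ IsSigma M (m + 1) (fun γ => R γ ∨ S γ)) ?_ ?_ hR
    · exact fun S hS R hR => sigma_pi hR hS
    · intro Γ _ S ih R hR
      have h := ih (hR.comp Prod.fst)
      exact ⟨h.1.ex.congr fun _ => exists_and_left.symm,
        (IsSigma.ex (R := fun γ x => R γ ∨ S γ x) h.2).congr fun _ => by
          rw [exists_or, exists_const]⟩

variable {R S : Γ → Prop}

instance IsSigma.and [hR : IsSigma M m R] [hS : IsSigma M m S] :
    IsSigma M m (fun γ => R γ ∧ S γ) := (hR.and_or hS).1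

instance IsSigma.or [hR : IsSigma M m R] [hS : IsSigma M m S] :
    IsSigma M m (fun γ => R γ ∨ S γ) := (hR.and_or hS).2

instance IsPi.and [IsPi M m R] [IsPi M m S] : IsPi M m (fun γ => R γ ∧ S γ) :=
  .of_not (IsSigma.or.congr fun _ => not_and_or)

instance IsPi.or [IsPi M m R] [IsPi M m S] : IsPi M m (fun γ => R γ ∨ S γ) :=
  .of_not (IsSigma.and.congr fun _ => not_or)

instance IsSigma.imp [IsPi M m R] [IsSigma M m S] : IsSigma M m (fun γ => R γ → S γ) :=
  IsSigma.or.congr fun _ => imp_iff_not_or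

instance IsPi.imp [IsSigma M m R] [IsPi M m S] : IsPi M m (fun γ => R γ → S γ) :=
  IsPi.or.congr fun _ => imp_iff_not_or

instance IsSigma.iff [IsSigma M m R] [IsPi M m R] [IsSigma M m S] [IsPi M m S] :
    IsSigma M m (fun γ => R γ ↔ S γ) := IsSigma.and.congr fun _ => iff_def

instance IsPi.iff [IsSigma M m R] [IsPi M m R] [IsSigma M m S] [IsPi M m S] :
    IsPi M m (fun γ => R γ ↔ S γ) := IsPi.and.congr fun _ => iff_def

end Connectives

section Quantifiers

variable {M : Type} [lang.Structure M] {Γ : Type} [Context M Γ] {m : ℕ}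

theorem IsPi.all {R : Γ → M → Prop} (h : IsPi M (m + 1) (fun p : Γ × M => R p.1 p.2)) :
    IsPi M (m + 1) (fun γ => ∀ x, R γ x) :=
  .of_not ((IsSigma.not (h := h)).ex.congr fun _ => not_forall)

theorem IsPi.termLT (f g : Γ → M) [IsTerm f] [IsTerm g] :
    IsPi M m (fun γ => f γ < g γ) :=
  (IsSigma.termLT f g).isPi_of_zero

theorem IsSigma.ball_of_zero {R : Γ → M → Prop} (h : IsSigma M 0 (fun p : Γ × M => R p.1 p.2))
    (f : Γ → M) [hf : IsTerm f] : IsSigma M 0 (fun γ => ∀ x < f γ, R γ x) := by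
  obtain ⟨φ, hφ, e⟩ := h.exists_isDelta0
  obtain ⟨t, ht⟩ := hf.exists_term
  refine ⟨_, .delta0 0 _ (.bdAll _ t hφ), fun γ => forall_congr' fun x => ?_⟩
  refine imp_congr ?_ (e (γ, x))
  rw [ht, realize_ltFm, realize_liftAt_snoc, Term.realize_var, Sum.elim_inr, Fin.snoc_last]

theorem IsPi.ball_of_term {R : Γ → M → Prop} (h : IsPi M m (fun p : Γ × M => R p.1 p.2))
    (f : Γ → M) [hf : IsTerm f] : IsPi M m (fun γ => ∀ x < f γ, R γ x) := by
  cases m with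
  | zero => exact (h.isSigma_of_zero.ball_of_zero f).isPi_of_zero
  | succ m =>
    have := IsSigma.termLT (m := m + 1) (fun p : Γ × M => p.2) (fun p => f p.1) (hg := hf.comp_fst)
    exact IsPi.all IsPi.imp

/-- Σ_m predicates are closed under bounded universal quantification. This always holds for
`m = 0`, and in general under Σ_m collection. -/
def SigmaBallClosed (M : Type) [lang.Structure M] (m : ℕ) : Prop :=
  ∀ {Γ : Type} [Context M Γ] {R : Γ → M → Prop}, IsSigma M m (fun p : Γ × M => R p.1 p.2) →
    ∀ (f : Γ → M) [IsTerm f], IsSigma M m (fun γ => ∀ x < f γ, R γ x)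

theorem SigmaBallClosed.isPi_bex (hc : SigmaBallClosed M m) {R : Γ → M → Prop}
    (_ : IsPi M m (fun p : Γ × M => R p.1 p.2)) (f : Γ → M) [IsTerm f] :
    IsPi M m (fun γ => ∃ x < f γ, R γ x) :=
  .of_not ((hc IsSigma.not f).congr fun _ => by push Not; rfl)

theorem SigmaBallClosed.exists_isPi [ModelPAm M] (hc : SigmaBallClosed M m) {R : Γ → Prop}
    (h : IsSigma M (m + 1) R) :
    ∃ P : Γ → M → Prop, IsPi M m (fun p : Γ × M => P p.1 p.2) ∧ ∀ γ, R γ ↔ ∃ y, P γ y := by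
  refine h.induction (motive := fun {Γ} _ R => ∃ P : Γ → M → Prop,
    IsPi M m (fun p : Γ × M => P p.1 p.2) ∧ ∀ γ, R γ ↔ ∃ y, P γ y) ?_ ?_
  · exact fun R hR => ⟨fun γ _ => R γ, hR.comp Prod.fst, fun _ => (exists_const M).symm⟩
  · intro Γ _ R ih
    obtain ⟨P, hP, hR⟩ := ih
    refine ⟨fun γ z => ∃ x < z + 1, ∃ y < z + 1, P (γ, x) y, ?_, fun γ => ?_⟩
    · refine hc.isPi_bex (R := fun (p : Γ × M) x => ∃ y < p.2 + 1, P (p.1, x) y) ?_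
        (fun p => p.2 + 1)
      refine hc.isPi_bex (R := fun (p : (Γ × M) × M) y => P (p.1.1, p.2) y) ?_ (fun p => p.1.2 + 1)
      exact hP.comp (fun p : ((Γ × M) × M) × M => ((p.1.1.1, p.1.2), p.2))
    · constructor
      · rintro ⟨x, hx⟩
        obtain ⟨y, hy⟩ := (hR (γ, x)).mp hx
        exact ⟨x + y, x, Order.lt_add_one_iff.mpr le_self_add, y,
          Order.lt_add_one_iff.mpr le_add_self, hy⟩
      · rintro ⟨_, x, _, y, _, hy⟩
        exact ⟨x, (hR (γ, x)).mpr ⟨y, hy⟩⟩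

end Quantifiers

/-! ### Parameters -/

section Parameters

theorem realize_congr_freeVarFinset {L : Language} {N α : Type} [L.Structure N] [DecidableEq α]
    {j : ℕ} {φ : L.BoundedFormula α j} {v w : α → N} (h : ∀ a ∈ φ.freeVarFinset, v a = w a)
    (xs : Fin j → N) : φ.Realize v xs ↔ φ.Realize w xs :=
  (BoundedFormula.realize_restrictFreeVar (f := id) (v := fun a => v a.1) v fun _ => rfl).symm.trans
    (BoundedFormula.realize_restrictFreeVar w fun a => h a a.2)

variable {M : Type} [lang.Structure M] {m k : ℕ}

theorem SigmaFm.isSigmaDef {φ : lang.BoundedFormula M k} (hφ : SigmaFm m k φ) :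
    IsSigmaDef m M (fun v : Fin k → M => φ.Realize id v) := by
  classical
  let S := φ.freeVarFinset
  -- only finitely many parameters occur in `φ`, so they can be listed by variables
  let σ : M ⊕ Fin k → lang.Term ((Fin k ⊕ Fin S.card) ⊕ Fin 0) := Sum.elim
    (fun a => if h : a ∈ S then Term.var (Sum.inl (Sum.inr (S.equivFin ⟨a, h⟩)))
      else Term.func (Func.zero : lang.Functions 0) ![])
    (fun i => Term.var (Sum.inl (Sum.inl i)))
  refine ⟨S.card, _, fun j => S.equivFin.symm j, hφ.substAll σ, fun v => ?_⟩
  rw [realize_substAll]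
  refine realize_congr_freeVarFinset (fun a ha => ?_) v
  simp [σ, show a ∈ S from ha]

theorem IsSigmaDef.exists_formula {R : (Fin k → M) → Prop} (h : IsSigmaDef m M R) :
    ∃ φ : lang.BoundedFormula M k, SigmaFm m k φ ∧ ∀ v, R v ↔ φ.Realize id v := by
  obtain ⟨p, φ, w, hφ, e⟩ := h
  refine ⟨_, hφ.substAll (Sum.elim
    (Sum.elim (fun i => Term.var (Sum.inr i)) (fun j => Term.var (Sum.inl (w j)))) finZeroElim),
    fun v => ?_⟩
  rw [e, realize_substAll]
  refine iff_of_eq (congrArg₂ _ (funext fun a => ?_) (Subsingleton.elim _ _))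
  cases a <;> rfl

theorem SigmaDef2.isSigma {R : M → M → Prop} (h : SigmaDef2 m M R) :
    IsSigma M m (fun p : (Unit × M) × M => R p.1.2 p.2) :=
  have ⟨φ, hφ, e⟩ := IsSigmaDef.exists_formula h
  ⟨φ, hφ, fun p => e (Context.get (M := M) p)⟩

theorem IsSigma.sigmaDef1 {R : M → Prop} (h : IsSigma M m (fun p : Unit × M => R p.2)) :
    SigmaDef1 m M {x | R x} := by
  obtain ⟨φ, hφ, e⟩ := h
  obtain ⟨p, ψ, w, hψ, e'⟩ := hφ.isSigmaDef
  refine ⟨p, ψ, w, hψ, fun v => (e ((), v 0)).trans ?_⟩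
  rw [← e']
  exact iff_of_eq (congrArg _ (funext fun i => by fin_cases i; rfl))

theorem IsSigma.sigmaDef2 {R : M → M → Prop}
    (h : IsSigma M m (fun p : (Unit × M) × M => R p.1.2 p.2)) : SigmaDef2 m M R := by
  obtain ⟨φ, hφ, e⟩ := h
  obtain ⟨p, ψ, w, hψ, e'⟩ := hφ.isSigmaDef
  refine ⟨p, ψ, w, hψ, fun v => (e (((), v 0), v 1)).trans ?_⟩
  rw [← e']
  exact iff_of_eq (congrArg _ (funext fun i => by fin_cases i <;> rfl))

end Parameters

/-! ### Collection -/

section Collection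

variable {M : Type} [lang.Structure M] [ModelPAm M] {m : ℕ}

theorem sigmaBallClosed_of_bSig (hB : BSig m M) : SigmaBallClosed M m := by
  induction m with
  | zero => exact fun h f _ => h.ball_of_zero f
  | succ m ih =>
    have hc : SigmaBallClosed M m := ih (hB.anti m.le_succ)
    intro Γ _ R h f hf
    obtain ⟨P, hP, hR⟩ := hc.exists_isPi h
    have bounded : IsSigma M (m + 1) (fun γ => ∃ b, ∀ x < f γ, ∃ y < b, P (γ, x) y) := by
      refine (IsPi.isSigma_succ ?_).ex
      refine IsPi.ball_of_term (R := fun (p : Γ × M) x => ∃ y < p.2, P (p.1, x) y) ?_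
        (fun p => f p.1) (hf := hf.comp_fst)
      refine hc.isPi_bex (R := fun (p : (Γ × M) × M) y => P (p.1.1, p.2) y) ?_ (fun p => p.1.2)
      exact hP.comp (fun p : ((Γ × M) × M) × M => ((p.1.1.1, p.1.2), p.2))
    refine bounded.congr fun γ => ⟨fun hx => ?_, fun ⟨b, hb⟩ x hx => ?_⟩
    · have hPγ : IsSigma M (m + 1) (fun p : (Unit × M) × M => P (γ, p.1.2) p.2) :=
        (hP.comp (fun p : (Unit × M) × M => ((γ, p.1.2), p.2))).isSigma_succ
      exact hB _ hPγ.sigmaDef2 (f γ) fun x hxf => (hR (γ, x)).mp (hx x hxf)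
    · obtain ⟨y, _, hy⟩ := hb x hx
      exact (hR (γ, x)).mpr ⟨y, hy⟩

theorem SigmaBallClosed.exists_bound (hc : SigmaBallClosed M m) (hI : ISig (m + 1) M)
    {P : M → M → Prop} (hP : IsPi M m (fun p : (Unit × M) × M => P p.1.2 p.2)) {a : M}
    (ha : ∀ x < a, ∃ y, P x y) : ∃ b, ∀ x < a, ∃ y < b, P x y := by
  let A (u : M) : Prop := ∃ b, ∀ x < u, x < a → ∃ y < b, P x y
  have hA : IsSigma M (m + 1) (fun p : Unit × M => A p.2) := by
    refine (IsPi.isSigma_succ ?_).ex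
    refine IsPi.ball_of_term (R := fun (p : (Unit × M) × M) x => x < a → ∃ y < p.2, P x y) ?_
      (fun p => p.1.2)
    have hlt := IsSigma.termLT (m := m) (fun p : ((Unit × M) × M) × M => p.2) (fun _ => a)
    have hex := hc.isPi_bex (R := fun (p : ((Unit × M) × M) × M) y => P p.2 y)
      (hP.comp (fun p : (((Unit × M) × M) × M) × M => (((), p.1.2), p.2))) (fun p => p.1.2)
    exact IsPi.imp
  have exists_bound_below (u : M) : A u := by
    refine hI _ hA.sigmaDef1 ⟨0, fun x hx => absurd hx not_lt_zero⟩ ?_ u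
    rintro u ⟨b, hb⟩
    by_cases hua : u < a
    · obtain ⟨y, hy⟩ := ha u hua
      refine ⟨max b (y + 1), fun x hx hxa => ?_⟩
      rcases (Order.lt_add_one_iff.mp hx).lt_or_eq with hx | rfl
      · obtain ⟨y', hy', h⟩ := hb x hx hxa
        exact ⟨y', lt_max_of_lt_left hy', h⟩
      · exact ⟨y, lt_max_of_lt_right (lt_add_one y), hy⟩
    · refine ⟨b, fun x hx hxa => hb x ?_ hxa⟩
      exact (Order.lt_add_one_iff.mp hx).lt_of_ne fun h => hua (h ▸ hxa)
  obtain ⟨b, hb⟩ := exists_bound_below a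
  exact ⟨b, fun x hx => hb x hx hx⟩

theorem SigmaBallClosed.bSig_succ (hc : SigmaBallClosed M m) (hI : ISig (m + 1) M) :
    BSig (m + 1) M := by
  intro R hR a ha
  obtain ⟨P, hP, hRP⟩ := hc.exists_isPi hR.isSigma
  let Q (x w : M) : Prop := ∃ y < w, ∃ z < w, P (((), x), y) z
  have hQ : IsPi M m (fun p : (Unit × M) × M => Q p.1.2 p.2) := by
    refine hc.isPi_bex (R := fun (p : (Unit × M) × M) y => ∃ z < p.2, P (((), p.1.2), y) z) ?_
      (fun p => p.2)
    refine hc.isPi_bex (R := fun (p : ((Unit × M) × M) × M) z => P (((), p.1.1.2), p.2) z) ?_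
      (fun p => p.1.2)
    exact hP.comp (fun p : (((Unit × M) × M) × M) × M => ((((), p.1.1.1.2), p.1.2), p.2))
  have exists_Q (x : M) (hx : x < a) : ∃ w, Q x w := by
    obtain ⟨y, hy⟩ := ha x hx
    obtain ⟨z, hz⟩ := (hRP (((), x), y)).mp hy
    exact ⟨y + z + 1, y, Order.lt_add_one_iff.mpr le_self_add, z,
      Order.lt_add_one_iff.mpr le_add_self, hz⟩
  obtain ⟨b, hb⟩ := hc.exists_bound hI hQ exists_Q
  refine ⟨b, fun x hx => ?_⟩
  obtain ⟨w, hw, y, hy, z, _, hz⟩ := hb x hx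
  exact ⟨y, hy.trans hw, (hRP (((), x), y)).mpr ⟨z, hz⟩⟩

theorem bSig_one_of_iSig_one (hI : ISig 1 M) : BSig 1 M :=
  SigmaBallClosed.bSig_succ (m := 0) (fun h f _ => h.ball_of_zero f) hI

end Collection

/-! ### Definability by instance search -/

/-- Models of PA⁻ + IΣ₁, the theory in which finite sets are coded and counted. -/
class ModelISigma1 (M : Type) [lang.Structure M] : Prop extends ModelPAm M where
  induction : ISig 1 M

/-- `BSig` as a class, so that instance search can use collection at level `m`. -/
class HasCollection (M : Type) [lang.Structure M] (m : ℕ) : Prop where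
  bSig : BSig m M

instance (M : Type) [lang.Structure M] [ModelISigma1 M] : HasCollection M 1 :=
  ⟨bSig_one_of_iSig_one ModelISigma1.induction⟩

section Functions

variable {M : Type} [lang.Structure M] {Γ Δ : Type} [Context M Γ] [Context M Δ] {m : ℕ}

/-- The graph of `f` is Σ₁-definable with parameters from `M`. -/
class IsSigmaFun (f : Γ → M) : Prop where
  graph : IsSigma M 1 (fun p : Γ × M => p.2 = f p.1)

instance IsSigma.exists [hm : NeZero m] {R : Γ → M → Prop}
    [h : IsSigma M m (fun p : Γ × M => R p.1 p.2)] : IsSigma M m (fun γ => ∃ x, R γ x) := by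
  obtain ⟨m, rfl⟩ := Nat.exists_eq_succ_of_ne_zero hm.out
  exact h.ex

instance IsPi.forall [hm : NeZero m] {R : Γ → M → Prop}
    [h : IsPi M m (fun p : Γ × M => R p.1 p.2)] : IsPi M m (fun γ => ∀ x, R γ x) := by
  obtain ⟨m, rfl⟩ := Nat.exists_eq_succ_of_ne_zero hm.out
  exact h.all

theorem IsSigma.comp_fun [NeZero m] {R : Γ → M → Prop}
    (_ : IsSigma M m (fun p : Γ × M => R p.1 p.2)) (f : Γ → M) [hf : IsSigmaFun f] :
    IsSigma M m (fun γ => R γ (f γ)) := by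
  have := hf.graph.mono (NeZero.one_le (n := m))
  exact (IsSigma.exists (R := fun γ x => x = f γ ∧ R γ x)).congr fun _ => exists_eq_left.symm

theorem IsSigmaFun.comp {f : Δ → M} (h : IsSigmaFun f) (g : Γ → Δ) [hg : IsTermMap M g] :
    IsSigmaFun (fun γ => f (g γ)) := by
  have : IsTermMap M (fun p : Γ × M => g p.1) := ⟨fun i => (hg.isTerm i).comp_fst⟩
  exact ⟨h.graph.comp (fun p : Γ × M => (g p.1, p.2))⟩

theorem IsSigmaFun.comp_fun {F : Γ → M → M} (h : IsSigmaFun (fun p : Γ × M => F p.1 p.2))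
    (f : Γ → M) [hf : IsSigmaFun f] : IsSigmaFun (fun γ => F γ (f γ)) := by
  have := hf.comp (fun p : Γ × M => p.1)
  have graph := h.graph.comp (fun p : (Γ × M) × M => ((p.1.1, p.2), p.1.2))
  exact ⟨graph.comp_fun (R := fun (p : Γ × M) x => p.2 = F p.1 x) (fun p => f p.1)⟩

theorem IsTerm.isSigmaFun {f : Γ → M} (hf : IsTerm f) : IsSigmaFun f :=
  have := hf.comp_fst
  ⟨IsSigma.termEq _ _⟩

instance IsSigmaFun.snd (g : Γ → Δ × M) [IsTermMap M g] : IsSigmaFun (fun γ => (g γ).2) :=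
  (IsTerm.snd g).isSigmaFun

instance IsSigmaFun.const (c : M) : IsSigmaFun (fun _ : Γ => c) := (IsTerm.const c).isSigmaFun

theorem IsSigmaFun.comp₁ {F : M → M} (h : IsSigmaFun (fun p : Unit × M => F p.2)) (f : Γ → M)
    [IsSigmaFun f] : IsSigmaFun (fun γ => F (f γ)) :=
  (h.comp (fun p : Γ × M => ((), p.2))).comp_fun (F := fun _ x => F x) f

theorem IsSigmaFun.comp₂ {F : M → M → M} (h : IsSigmaFun (fun p : (Unit × M) × M => F p.1.2 p.2))
    (f g : Γ → M) [IsSigmaFun f] [hg : IsSigmaFun g] : IsSigmaFun (fun γ => F (f γ) (g γ)) := by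
  have := hg.comp (fun p : Γ × M => p.1)
  have hF := h.comp (fun p : (Γ × M) × M => (((), p.1.2), p.2))
  exact (hF.comp_fun (F := fun (p : Γ × M) x => F p.2 x) (fun p => g p.1)).comp_fun
    (F := fun γ x => F x (g γ)) f

variable [NeZero m]

theorem IsSigma.comp₁ {R : M → Prop} (h : IsSigma M m (fun p : Unit × M => R p.2)) (f : Γ → M)
    [IsSigmaFun f] : IsSigma M m (fun γ => R (f γ)) :=
  (h.comp (fun p : Γ × M => ((), p.2))).comp_fun (R := fun _ x => R x) f

theorem IsSigma.comp₂ {R : M → M → Prop} (h : IsSigma M m (fun p : (Unit × M) × M => R p.1.2 p.2))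
    (f g : Γ → M) [IsSigmaFun f] [hg : IsSigmaFun g] : IsSigma M m (fun γ => R (f γ) (g γ)) := by
  have := hg.comp (fun p : Γ × M => p.1)
  have hR := h.comp (fun p : (Γ × M) × M => (((), p.1.2), p.2))
  exact (hR.comp_fun (R := fun (p : Γ × M) x => R p.2 x) (fun p => g p.1)).comp_fun
    (R := fun γ x => R x (g γ)) f

theorem IsPi.comp₁ {R : M → Prop} (_ : IsPi M m (fun p : Unit × M => R p.2)) (f : Γ → M)
    [IsSigmaFun f] : IsPi M m (fun γ => R (f γ)) :=
  .of_not (IsSigma.not.comp₁ (R := fun x => ¬ R x) f)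

theorem IsPi.comp₂ {R : M → M → Prop} (_ : IsPi M m (fun p : (Unit × M) × M => R p.1.2 p.2))
    (f g : Γ → M) [IsSigmaFun f] [IsSigmaFun g] : IsPi M m (fun γ => R (f γ) (g γ)) :=
  .of_not (IsSigma.not.comp₂ (R := fun x y => ¬ R x y) f g)

instance IsSigma.eq (f g : Γ → M) [IsSigmaFun f] [IsSigmaFun g] :
    IsSigma M m (fun γ => f γ = g γ) := .comp₂ (IsSigma.termEq _ _) f g

instance IsPi.eq (f g : Γ → M) [IsSigmaFun f] [IsSigmaFun g] : IsPi M m (fun γ => f γ = g γ) :=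
  .comp₂ (IsSigma.termEq _ _).isPi_of_zero f g

instance IsSigma.lt (f g : Γ → M) [IsSigmaFun f] [IsSigmaFun g] :
    IsSigma M m (fun γ => f γ < g γ) := .comp₂ (IsSigma.termLT _ _) f g

instance IsPi.lt (f g : Γ → M) [IsSigmaFun f] [IsSigmaFun g] : IsPi M m (fun γ => f γ < g γ) :=
  .comp₂ (IsPi.termLT _ _) f g

instance IsSigma.ne (f g : Γ → M) [IsSigmaFun f] [IsSigmaFun g] :
    IsSigma M m (fun γ => f γ ≠ g γ) := IsSigma.not

instance IsPi.ne (f g : Γ → M) [IsSigmaFun f] [IsSigmaFun g] : IsPi M m (fun γ => f γ ≠ g γ) :=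
  IsPi.not

instance IsSigmaFun.ite (P : Γ → Prop) [DecidablePred P] (f g : Γ → M) [h : IsSigma M 1 P]
    [h' : IsPi M 1 P] [hf : IsSigmaFun f] [hg : IsSigmaFun g] :
    IsSigmaFun (fun γ => if P γ then f γ else g γ) := by
  have := h.comp (fun p : Γ × M => p.1)
  have := h'.comp (fun p : Γ × M => p.1)
  have := hf.comp (fun p : Γ × M => p.1)
  have := hg.comp (fun p : Γ × M => p.1)
  have cases : IsSigma M 1
      (fun p : Γ × M => (P p.1 ∧ p.2 = f p.1) ∨ (¬ P p.1 ∧ p.2 = g p.1)) := inferInstance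
  exact ⟨cases.congr fun p => by split_ifs with hP <;> simp [hP]⟩

theorem IsSigmaFun.of_graph {f : Γ → M} {G : Γ → M → Prop}
    (h : IsSigma M 1 (fun p : Γ × M => G p.1 p.2)) (e : ∀ γ x, G γ x ↔ x = f γ) : IsSigmaFun f :=
  ⟨h.congr fun p => (e p.1 p.2).symm⟩

end Functions

section Arithmetic

variable {M : Type} [lang.Structure M] [ModelPAm M] {Γ : Type} [Context M Γ] {m : ℕ}

instance IsSigmaFun.add (f g : Γ → M) [IsSigmaFun f] [IsSigmaFun g] :
    IsSigmaFun (fun γ => f γ + g γ) :=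
  IsSigmaFun.comp₂ (F := fun x y => x + y) (IsTerm.add _ _).isSigmaFun f g

instance IsSigmaFun.mul (f g : Γ → M) [IsSigmaFun f] [IsSigmaFun g] :
    IsSigmaFun (fun γ => f γ * g γ) :=
  IsSigmaFun.comp₂ (F := fun x y => x * y) (IsTerm.mul _ _).isSigmaFun f g

instance (priority := low) IsSigma.const (P : Prop) : IsSigma M m (fun _ : Γ => P) := by
  by_cases h : P
  · exact (IsSigma.termEq (fun _ : Γ => (0 : M)) (fun _ => 0)).congr fun _ => by simp [h]
  · exact (IsSigma.termEq (fun _ : Γ => (0 : M)) (fun _ => 1)).congr fun _ => by simp [h]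

instance (priority := low) IsPi.const (P : Prop) : IsPi M m (fun _ : Γ => P) :=
  .of_not (IsSigma.const _)

variable [NeZero m]

instance IsSigma.le (f g : Γ → M) [IsSigmaFun f] [IsSigmaFun g] :
    IsSigma M m (fun γ => f γ ≤ g γ) := IsSigma.not.congr fun _ => not_lt.symm

instance IsPi.le (f g : Γ → M) [IsSigmaFun f] [IsSigmaFun g] : IsPi M m (fun γ => f γ ≤ g γ) :=
  IsPi.not.congr fun _ => not_lt.symm

variable [hB : HasCollection M m] {R : Γ → M → Prop}

instance IsSigma.ball (f : Γ → M) [IsSigmaFun f] [h : IsSigma M m (fun p : Γ × M => R p.1 p.2)] :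
    IsSigma M m (fun γ => ∀ x < f γ, R γ x) := by
  have bounded := sigmaBallClosed_of_bSig hB.bSig (R := fun (p : Γ × M) x => R p.1 x)
    (h.comp (fun p : (Γ × M) × M => (p.1.1, p.2))) (fun p => p.2)
  exact bounded.comp_fun (R := fun γ b => ∀ x < b, R γ x) f

instance IsSigma.ball_le (f : Γ → M) [IsSigmaFun f]
    [IsSigma M m (fun p : Γ × M => R p.1 p.2)] : IsSigma M m (fun γ => ∀ x ≤ f γ, R γ x) := by
  have : IsSigma M m (fun γ => ∀ x < f γ + 1, R γ x) := inferInstance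
  simpa only [Order.lt_add_one_iff] using this

instance IsPi.bex (f : Γ → M) [IsSigmaFun f] [IsPi M m (fun p : Γ × M => R p.1 p.2)] :
    IsPi M m (fun γ => ∃ x < f γ, R γ x) :=
  .of_not ((IsSigma.ball (R := fun γ x => ¬ R γ x) f).congr fun _ => by push Not; rfl)

instance IsPi.bex_le (f : Γ → M) [IsSigmaFun f] [IsPi M m (fun p : Γ × M => R p.1 p.2)] :
    IsPi M m (fun γ => ∃ x ≤ f γ, R γ x) :=
  .of_not ((IsSigma.ball_le (R := fun γ x => ¬ R γ x) f).congr fun _ => by push Not; rfl)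

end Arithmetic

section Induction

variable {M : Type} [lang.Structure M] {m : ℕ}

theorem ISig.induction (hI : ISig m M) {R : M → Prop} (zero : R 0) (succ : ∀ x, R x → R (x + 1))
    (x : M) (h : IsSigma M m (fun p : Unit × M => R p.2) := by infer_instance) : R x :=
  hI _ h.sigmaDef1 zero succ x

variable [ModelISigma1 M]

theorem sigma_induction {R : M → Prop} (zero : R 0) (succ : ∀ x, R x → R (x + 1)) (x : M)
    (h : IsSigma M 1 (fun p : Unit × M => R p.2) := by infer_instance) : R x :=
  ModelISigma1.induction.induction zero succ x h

theorem sigma_strong_induction {R : M → Prop} (ind : ∀ x, (∀ y < x, R y) → R x) (x : M)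
    (h : IsSigma M 1 (fun p : Unit × M => R p.2) := by infer_instance) : R x := by
  have := h.comp (fun p : (Unit × M) × M => ((), p.2))
  have below (x : M) : ∀ y < x, R y := by
    refine sigma_induction (R := fun x => ∀ y < x, R y) ?_ (fun x ih y hy => ?_) x
    · exact fun y hy => absurd hy not_lt_zero
    · exact ind y fun z hz => ih z (hz.trans_le (Order.lt_add_one_iff.mp hy))
  exact below (x + 1) x (lt_add_one x)

theorem exists_least {R : M → Prop} (hR : ∃ x, R x)
    (_ : IsPi M 1 (fun p : Unit × M => R p.2) := by infer_instance) :
    ∃ x, R x ∧ ∀ y < x, ¬ R y := by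
  by_contra! hc
  obtain ⟨x, hx⟩ := hR
  refine sigma_strong_induction (R := fun x => ¬ R x) (fun x ih hx => ?_) x IsSigma.not hx
  obtain ⟨y, hyx, hy⟩ := hc x hx
  exact ih y hyx hy

theorem sigma_induction_le {R : M → Prop} (b : M) (zero : R 0)
    (succ : ∀ x < b, R x → R (x + 1)) (x : M) (hx : x ≤ b)
    (_ : IsSigma M 1 (fun p : Unit × M => R p.2) := by infer_instance) : R x := by
  refine sigma_induction (R := fun x => x ≤ b → R x) (fun _ => zero) (fun x ih hx => ?_) x
    inferInstance hx
  have hxb : x < b := Order.add_one_le_iff.mp hx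
  exact succ x hxb (ih hxb.le)

end Induction

-- The instances proving definability have the size of the defining formulas.
set_option synthInstance.maxSize 2000

/-! ### Coding of sequences by the β-function -/

section Beta

variable {M : Type} [lang.Structure M]

theorem eq_of_mul_add_eq_mul_add [ModelPAm M] {m q q' r r' : M} (hr : r < m) (hr' : r' < m)
    (h : q * m + r = q' * m + r') : r = r' := by
  have le_of_eq {q q' r r' : M} (hr : r < m) (h : q * m + r = q' * m + r') : q' ≤ q := by
    by_contra! hlt
    have : q * m + r < q * m + r :=
      calc q * m + r < q * m + m := by gcongr
        _ = (q + 1) * m := by ring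
        _ ≤ q' * m := by gcongr; exact Order.add_one_le_iff.mpr hlt
        _ ≤ q * m + r := h ▸ le_self_add
    exact this.false
  obtain rfl : q = q' := le_antisymm (le_of_eq hr' h.symm) (le_of_eq hr h)
  exact add_left_cancel h

theorem IsPairC.add_le_add [ModelPAm M] {s a b a' b' : M} (h : IsPairC s a b)
    (h' : IsPairC s a' b') : a + b ≤ a' + b' := by
  by_contra! hlt
  have : s + s < s + s :=
    calc s + s = (a' + b') * (a' + b' + 1) + (b' + b') := h'
      _ < (a' + b') * (a' + b' + 1) + (b' + b') + (a' + a' + 1 + 1) :=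
        lt_add_of_pos_right _ (by positivity)
      _ = (a' + b' + 1) * (a' + b' + 1 + 1) := by ring
      _ ≤ (a + b) * (a + b + 1) := by
        have := Order.add_one_le_iff.mpr hlt
        exact mul_le_mul' this (add_le_add_left this 1)
      _ ≤ s + s := h ▸ le_self_add
  exact this.false

theorem IsPairC.unique [ModelPAm M] {s a b a' b' : M} (h : IsPairC s a b)
    (h' : IsPairC s a' b') : a = a' ∧ b = b' := by
  have sum : a + b = a' + b' := le_antisymm (h.add_le_add h') (h'.add_le_add h)
  unfold IsPairC at h h'
  rw [h, sum] at h'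
  have := add_left_cancel h'
  grind

variable [ModelISigma1 M]

theorem exists_eq_mul_add {m : M} (hm : 0 < m) (a : M) : ∃ r < m, ∃ q, a = q * m + r := by
  refine sigma_induction (R := fun a => ∃ r < m, ∃ q, a = q * m + r) ⟨0, hm, 0, by ring⟩ ?_ a
  rintro _ ⟨r, hr, q, rfl⟩
  rcases (Order.add_one_le_iff.mpr hr).lt_or_eq with h | h
  · exact ⟨r + 1, h, q, by ring⟩
  · exact ⟨0, hm, q + 1, by rw [← h]; ring⟩

theorem exists_isPairC (a b : M) : ∃ s, IsPairC s a b := by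
  obtain ⟨t, ht⟩ : ∃ t, t + t = (a + b) * (a + b + 1) := by
    refine sigma_induction (R := fun n => ∃ t, t + t = n * (n + 1)) ⟨0, by ring⟩ ?_ (a + b)
    rintro n ⟨t, ht⟩
    exact ⟨t + n + 1, by linear_combination ht⟩
  exact ⟨t + b, by unfold IsPairC; linear_combination ht⟩

theorem exists_eq_pair (s : M) : ∃ a b, IsPairC s a b := by
  unfold IsPairC
  refine sigma_induction (R := fun s => ∃ a b, s + s = (a + b) * (a + b + 1) + (b + b))
    ⟨0, 0, by ring⟩ ?_ s
  rintro s ⟨a, b, h⟩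
  by_cases ha : a = 0
  · exact ⟨b + 1, 0, by subst ha; linear_combination h⟩
  · obtain ⟨a, rfl⟩ := ModelPAm.exists_eq_add_one ha
    exact ⟨a, b + 1, by linear_combination h⟩

theorem exists_seqAt (s i : M) : ∃ x, SeqAt s i x := by
  obtain ⟨a, b, hs⟩ := exists_eq_pair s
  obtain ⟨x, hx, hq⟩ := exists_eq_mul_add (m := (i + 1) * b + 1) (by positivity) a
  exact ⟨x, a, b, hs, hx, hq⟩

/-- The `i`-th entry of the sequence coded by `s`. In a model of IΣ₁ every element codes a pair,
so every `s` is an infinite sequence of which only an initial segment is of interest. -/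
noncomputable def entry (s i : M) : M := (exists_seqAt s i).choose

theorem entry_eq_iff {s i x : M} : entry s i = x ↔ SeqAt s i x := by
  have spec : SeqAt s i (entry s i) := (exists_seqAt s i).choose_spec
  refine ⟨fun h => h ▸ spec, fun h => ?_⟩
  obtain ⟨a, b, hs, hlt, q, hq⟩ := spec
  obtain ⟨a', b', hs', hlt', q', hq'⟩ := h
  obtain ⟨rfl, rfl⟩ := hs.unique hs'
  exact eq_of_mul_add_eq_mul_add hlt hlt' (hq.symm.trans hq')

instance IsSigmaFun.entry {Γ : Type} [Context M Γ] (f g : Γ → M) [IsSigmaFun f] [IsSigmaFun g] :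
    IsSigmaFun (fun γ => entry (f γ) (g γ)) := by
  refine IsSigmaFun.comp₂ (F := ArithFC.entry) (.of_graph (G := fun p x => SeqAt p.1.2 p.2 x) ?_
    fun p x => by rw [← entry_eq_iff, eq_comm]) f g
  unfold SeqAt IsPairC BetaC
  infer_instance

instance IsSigma.dvd {Γ : Type} [Context M Γ] (f g : Γ → M) [IsSigmaFun f] [IsSigmaFun g] :
    IsSigma M 1 (fun γ => f γ ∣ g γ) :=
  IsSigma.comp₂ (R := fun x y => x ∣ y) (by unfold Dvd.dvd semigroupDvd; infer_instance) f g

end Beta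

section ChineseRemainder

variable {M : Type} [lang.Structure M]

/-- `c` is invertible modulo `m`, the form of coprimality used for Chinese remaindering. -/
def IsUnitMod [ModelPAm M] (c m : M) : Prop := ∃ u w, c * u = m * w + 1

theorem IsUnitMod.mul [ModelPAm M] {c c' m : M} (h : IsUnitMod c m) (h' : IsUnitMod c' m) :
    IsUnitMod (c * c') m := by
  obtain ⟨u, w, e⟩ := h
  obtain ⟨u', w', e'⟩ := h'
  refine ⟨u * u', m * w * w' + w + w', ?_⟩
  calc c * c' * (u * u') = (c * u) * (c' * u') := by ring
    _ = m * (m * w * w' + w + w') + 1 := by rw [e, e']; ring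

theorem IsUnitMod.exists_add_mul_eq [ModelPAm M] {c m : M} (h : IsUnitMod c m) (hm : m ≠ 0)
    (a r : M) : ∃ t q, a + c * t = q * m + r := by
  obtain ⟨u, w, e⟩ := h
  obtain ⟨k, rfl⟩ := ModelPAm.exists_eq_add_one hm
  -- `r + k * a` is congruent to `r - a` modulo `k + 1`.
  exact ⟨u * (r + k * a), w * (r + k * a) + a, by linear_combination (r + k * a) * e⟩

-- For the two moduli `m` and `n`, one has `(j + 1) * m - (i + 1) * n = j - i`,
-- which divides `b`, and `b` is invertible modulo `n` because `-(j + 1) * b` is `1` modulo `n`.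
theorem isUnitMod_beta_modulus [ModelPAm M] {i j b : M} (hij : i < j) (hb : b ≠ 0)
    (dvd : ∀ d < j, d + 1 ∣ b) : IsUnitMod ((i + 1) * b + 1) ((j + 1) * b + 1) := by
  obtain ⟨d, rfl⟩ := exists_add_of_le (Order.add_one_le_iff.mpr hij)
  obtain ⟨b', hb'⟩ := dvd d (lt_of_lt_of_le (lt_add_of_pos_left d (by positivity)) le_rfl)
  set j := i + 1 + d + 1 with hj
  have ne_zero : j * j * b * b' * (i + 1) + j * b ≠ 0 := by
    have := pos_of_ne_zero hb
    positivity
  obtain ⟨w, hw⟩ := ModelPAm.exists_eq_add_one ne_zero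
  refine ⟨b' * j * j * j * b, w, add_right_cancel (b := j * b + 1) ?_⟩
  calc ((i + 1) * b + 1) * (b' * j * j * j * b) + (j * b + 1)
      = (j * b + 1) * (j * j * b * b' * (i + 1) + j * b) + 1 := by rw [hb', hj]; ring
    _ = (j * b + 1) * w + 1 + (j * b + 1) := by rw [hw]; ring

variable [ModelISigma1 M]

theorem chinese_remainder {m f : M → M} (hm : IsSigmaFun (fun p : Unit × M => m p.2))
    (hf : IsSigmaFun (fun p : Unit × M => f p.2)) (N : M) (ne_zero : ∀ i, m i ≠ 0)
    (coprime : ∀ i j, i < j → j < N → IsUnitMod (m i) (m j)) :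
    ∃ a, ∀ i < N, ∃ q, a = q * m i + f i := by
  have := fun Γ [Context M Γ] (g : Γ → M) [IsSigmaFun g] => hm.comp₁ g
  have := fun Γ [Context M Γ] (g : Γ → M) [IsSigmaFun g] => hf.comp₁ g
  suffices ∃ a c, (∀ i < N, ∃ q, a = q * m i + f i) ∧ (∀ i < N, m i ∣ c) ∧
      ∀ j < N, N ≤ j → IsUnitMod c (m j) by
    obtain ⟨a, -, ha, -⟩ := this
    exact ⟨a, ha⟩
  unfold IsUnitMod at *
  refine sigma_induction_le (R := fun n => ∃ a c, (∀ i < n, ∃ q, a = q * m i + f i) ∧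
    (∀ i < n, m i ∣ c) ∧ ∀ j < N, n ≤ j → ∃ u w, c * u = m j * w + 1) N ?_ ?_ N le_rfl
  · exact ⟨0, 1, fun _ h => absurd h not_lt_zero, fun _ h => absurd h not_lt_zero,
      fun _ _ _ => ⟨1, 0, by ring⟩⟩
  rintro n hn ⟨a, c, ha, hc, unit⟩
  obtain ⟨t, q, hq⟩ := IsUnitMod.exists_add_mul_eq (unit n hn le_rfl) (ne_zero n) a (f n)
  refine ⟨a + c * t, c * m n, fun i hi => ?_, fun i hi => ?_, fun j hj hnj => ?_⟩
  · rcases (Order.lt_add_one_iff.mp hi).lt_or_eq with hi | rfl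
    · obtain ⟨p, hp⟩ := ha i hi
      obtain ⟨v, rfl⟩ := hc i hi
      exact ⟨p + v * t, by linear_combination hp⟩
    · exact ⟨q, hq⟩
  · rcases (Order.lt_add_one_iff.mp hi).lt_or_eq with hi | rfl
    · exact (hc i hi).mul_right _
    · exact dvd_mul_left _ _
  · have hnj := Order.add_one_le_iff.mp hnj
    exact IsUnitMod.mul (unit j hj hnj.le) (coprime n j hnj hj)

theorem exists_forall_lt_dvd (N : M) : ∃ b, b ≠ 0 ∧ ∀ d < N, d + 1 ∣ b := by
  refine sigma_induction (R := fun N => ∃ b, b ≠ 0 ∧ ∀ d < N, d + 1 ∣ b)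
    ⟨1, one_ne_zero, fun _ h => absurd h not_lt_zero⟩ ?_ N
  rintro N ⟨b, hb, h⟩
  refine ⟨b * (N + 1), mul_ne_zero hb (by positivity), fun d hd => ?_⟩
  rcases (Order.lt_add_one_iff.mp hd).lt_or_eq with hd | rfl
  · exact (h d hd).mul_right _
  · exact dvd_mul_left _ _

theorem exists_forall_lt_le {f : M → M} (hf : IsSigmaFun (fun p : Unit × M => f p.2)) (N : M) :
    ∃ B, ∀ i < N, f i ≤ B := by
  have := fun Γ [Context M Γ] (g : Γ → M) [IsSigmaFun g] => hf.comp₁ g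
  refine sigma_induction (R := fun N => ∃ B, ∀ i < N, f i ≤ B)
    ⟨0, fun _ h => absurd h not_lt_zero⟩ ?_ N
  rintro N ⟨B, h⟩
  refine ⟨B + f N, fun i hi => ?_⟩
  rcases (Order.lt_add_one_iff.mp hi).lt_or_eq with hi | rfl
  · exact (h i hi).trans le_self_add
  · exact le_add_self

theorem exists_entry_eq {f : M → M} (hf : IsSigmaFun (fun p : Unit × M => f p.2)) (N : M) :
    ∃ s, ∀ i < N, entry s i = f i := by
  obtain ⟨B, hB⟩ := exists_forall_lt_le hf N
  obtain ⟨b₀, hb₀, dvd⟩ := exists_forall_lt_dvd N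
  have hb : b₀ * (B + 1) ≠ 0 := mul_ne_zero hb₀ (by positivity)
  obtain ⟨b, hb_def⟩ : ∃ b, b = b₀ * (B + 1) := ⟨_, rfl⟩
  rw [← hb_def] at hb
  have coprime (i j : M) (hij : i < j) (hj : j < N) :
      IsUnitMod ((i + 1) * b + 1) ((j + 1) * b + 1) :=
    isUnitMod_beta_modulus hij hb fun d hd => hb_def ▸ (dvd d (hd.trans hj)).mul_right _
  have modulus : IsSigmaFun (fun p : Unit × M => (p.2 + 1) * b + 1) := inferInstance
  obtain ⟨a, ha⟩ := chinese_remainder modulus hf N (fun i => by positivity) coprime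
  obtain ⟨s, hs⟩ := exists_isPairC a b
  refine ⟨s, fun i hi => entry_eq_iff.mpr ⟨a, b, hs, ?_, ha i hi⟩⟩
  calc f i ≤ 1 * B := by rw [one_mul]; exact hB i hi
    _ ≤ b := by
      rw [hb_def]
      gcongr
      · exact Order.one_le_iff_pos.mpr (pos_of_ne_zero hb₀)
      · exact le_self_add
    _ ≤ (i + 1) * b := le_mul_of_one_le_left zero_le le_add_self
    _ < (i + 1) * b + 1 := lt_add_one _

theorem exists_append (s n v : M) : ∃ s', (∀ i < n, entry s' i = entry s i) ∧ entry s' n = v := by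
  obtain ⟨s', hs'⟩ := exists_entry_eq (f := fun i => if i < n then entry s i else v)
    inferInstance (n + 1)
  refine ⟨s', fun i hi => ?_, ?_⟩
  · rw [hs' i (hi.trans (lt_add_one n)), if_pos hi]
  · rw [hs' n (lt_add_one n), if_neg (lt_irrefl n)]

theorem exists_forall_lt_entry {m : ℕ} [NeZero m] [HasCollection M m] (hI : ISig m M)
    {F : M → M → Prop} (hF : IsSigma M m (fun p : (Unit × M) × M => F p.1.2 p.2)) (N : M)
    (h : ∀ i < N, ∃ v, F i v) : ∃ s, ∀ i < N, F i (entry s i) := by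
  have := fun Γ [Context M Γ] (f g : Γ → M) [IsSigmaFun f] [IsSigmaFun g] => hF.comp₂ f g
  refine hI.induction (R := fun n => n ≤ N → ∃ s, ∀ i < n, F i (entry s i)) ?_ ?_ N inferInstance
    le_rfl
  · exact fun _ => ⟨0, fun _ h => absurd h not_lt_zero⟩
  intro n ih hn
  have hn := Order.add_one_le_iff.mp hn
  obtain ⟨s, hs⟩ := ih hn.le
  obtain ⟨v, hv⟩ := h n hn
  obtain ⟨s', old, new⟩ := exists_append s n v
  refine ⟨s', fun i hi => ?_⟩
  rcases (Order.lt_add_one_iff.mp hi).lt_or_eq with hi | rfl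
  · rw [old i hi]
    exact hs i hi
  · rwa [new]

end ChineseRemainder

section PrimitiveRecursion

variable {M : Type} [lang.Structure M] [ModelISigma1 M]

/-- `s` lists, up to place `n`, the values of the function defined by primitive recursion from the
initial value `c` and the step function `h`. -/
def IsCourseOfValues (c : M) (h : M → M → M) (s n : M) : Prop :=
  entry s 0 = c ∧ ∀ i < n, entry s (i + 1) = h i (entry s i)

theorem exists_isCourseOfValues (c : M) {h : M → M → M}
    (hh : IsSigmaFun (fun p : (Unit × M) × M => h p.1.2 p.2)) (n : M) :
    ∃ s, IsCourseOfValues c h s n := by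
  have := fun Γ [Context M Γ] (f g : Γ → M) [IsSigmaFun f] [IsSigmaFun g] => hh.comp₂ f g
  unfold IsCourseOfValues
  refine sigma_induction (R := fun n => ∃ s, entry s 0 = c ∧
    ∀ i < n, entry s (i + 1) = h i (entry s i)) ?_ ?_ n
  · obtain ⟨s, -, hs⟩ := exists_append (0 : M) 0 c
    exact ⟨s, hs, fun _ h => absurd h not_lt_zero⟩
  rintro n ⟨s, zero, succ⟩
  obtain ⟨s', old, new⟩ := exists_append s (n + 1) (h n (entry s n))
  refine ⟨s', by rw [old 0 (by positivity), zero], fun i hi => ?_⟩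
  rcases (Order.lt_add_one_iff.mp hi).lt_or_eq with hin | rfl
  · rw [old i hi, old (i + 1) (by grind), succ i hin]
  · rw [old i hi, new]

theorem IsCourseOfValues.entry_eq {c : M} {h : M → M → M} {s s' n n' : M}
    (hs : IsCourseOfValues c h s n) (hs' : IsCourseOfValues c h s' n') (i : M) (hi : i ≤ n)
    (hi' : i ≤ n') : entry s i = entry s' i := by
  refine sigma_induction_le (R := fun i => entry s i = entry s' i) i (hs.1.trans hs'.1.symm)
    (fun j hj ih => ?_) i le_rfl
  rw [hs.2 j (hj.trans_le hi), hs'.2 j (hj.trans_le hi'), ih]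

theorem exists_primitive_recursion {Γ : Type} [Context M Γ] (c : Γ → M) (h : Γ → M → M → M)
    [hc : IsSigmaFun c] (hh : IsSigmaFun (fun p : (Γ × M) × M => h p.1.1 p.1.2 p.2)) :
    ∃ f : Γ → M → M, (∀ γ, f γ 0 = c γ) ∧ (∀ γ n, f γ (n + 1) = h γ n (f γ n)) ∧
      IsSigmaFun (fun p : Γ × M => f p.1 p.2) := by
  have course (γ : Γ) (n : M) : ∃ s, IsCourseOfValues (c γ) (h γ) s n :=
    exists_isCourseOfValues (c γ) (hh.comp (fun p : (Unit × M) × M => ((γ, p.1.2), p.2))) n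
  choose S hS using course
  refine ⟨fun γ n => entry (S γ n) n, fun γ => (hS γ 0).1, fun γ n => ?_, ?_⟩
  · simp only
    rw [(hS γ (n + 1)).2 n (lt_add_one n),
      (hS γ (n + 1)).entry_eq (hS γ n) n (lt_add_one n).le le_rfl]
  · have := hc.comp (fun p : ((Γ × M) × M) × M => p.1.1.1)
    have : IsSigmaFun (fun p : (((Γ × M) × M) × M) × M => h p.1.1.1.1 p.2 (entry p.1.2 p.2)) :=
      (hh.comp (fun p : ((((Γ × M) × M) × M) × M) × M => ((p.1.1.1.1.1, p.1.2), p.2))).comp_fun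
        (F := fun (p : (((Γ × M) × M) × M) × M) x => h p.1.1.1.1 p.2 x) (fun p => entry p.1.2 p.2)
    refine .of_graph (G := fun p x => ∃ s, (entry s 0 = c p.1 ∧
      ∀ i < p.2, entry s (i + 1) = h p.1 i (entry s i)) ∧ x = entry s p.2) inferInstance ?_
    refine fun p x => ⟨?_, fun hx => ⟨S p.1 p.2, hS p.1 p.2, hx⟩⟩
    rintro ⟨s, hs, rfl⟩
    exact IsCourseOfValues.entry_eq hs (hS p.1 p.2) p.2 le_rfl le_rfl

end PrimitiveRecursion

/-! ### Exponentiation and bitsets -/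

section Power

variable {M : Type} [lang.Structure M] [ModelISigma1 M] {Γ : Type} [Context M Γ]

theorem exists_power (M : Type) [lang.Structure M] [ModelISigma1 M] :
    ∃ f : Unit × M → M → M, (∀ γ, f γ 0 = 1) ∧ (∀ γ n, f γ (n + 1) = f γ n * γ.2) ∧
      IsSigmaFun (fun p : (Unit × M) × M => f p.1 p.2) :=
  exists_primitive_recursion (Γ := Unit × M) (fun _ => 1) (fun γ _ v => v * γ.2) inferInstance

/-- The power `b ^ n` with base and exponent in the model. -/
noncomputable def power (b n : M) : M := (exists_power M).choose ((), b) n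

@[simp] theorem power_zero (b : M) : power b 0 = 1 := (exists_power M).choose_spec.1 _

theorem power_succ (b n : M) : power b (n + 1) = power b n * b :=
  (exists_power M).choose_spec.2.1 _ _

instance IsSigmaFun.power (f g : Γ → M) [IsSigmaFun f] [IsSigmaFun g] :
    IsSigmaFun (fun γ => power (f γ) (g γ)) :=
  .comp₂ (F := ArithFC.power) (exists_power M).choose_spec.2.2 f g

theorem power_pos {b : M} (hb : 0 < b) (n : M) : 0 < power b n := by
  refine sigma_induction (R := fun n => 0 < power b n) ?_ (fun n ih => ?_) n
  · rw [power_zero]; exact zero_lt_one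
  · rw [power_succ]; exact mul_pos ih hb

theorem power_add (b n d : M) : power b (n + d) = power b n * power b d := by
  refine sigma_induction (R := fun d => power b (n + d) = power b n * power b d) ?_
    (fun d ih => ?_) d
  · rw [power_zero, add_zero, mul_one]
  · rw [← add_assoc, power_succ, power_succ, ih, mul_assoc]

theorem power_le_power_right {b n m : M} (hb : 0 < b) (h : n ≤ m) : power b n ≤ power b m := by
  obtain ⟨d, rfl⟩ := exists_add_of_le h
  rw [power_add]
  exact le_mul_of_one_le_right' (Order.one_le_iff_pos.mpr (power_pos hb d))

theorem power_two_succ (n : M) : power 2 (n + 1) = power 2 n + power 2 n := by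
  rw [power_succ, mul_two]

theorem power_two_pos (n : M) : 0 < power 2 n := power_pos two_pos n

theorem lt_power_two (n : M) : n < power 2 n := by
  refine sigma_induction (R := fun n => n < power 2 n) ?_ (fun n ih => ?_) n
  · rw [power_zero]; exact zero_lt_one
  · calc n + 1 ≤ power 2 n := Order.add_one_le_iff.mpr ih
      _ < power 2 n + power 2 n := lt_add_of_pos_right _ (power_two_pos n)
      _ = power 2 (n + 1) := (power_two_succ n).symm

theorem exists_eq_power_two_add {s : M} (hs : s ≠ 0) :
    ∃ n, ∃ t < power 2 n, s = power 2 n + t := by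
  obtain ⟨m, hm, hmin⟩ := exists_least (R := fun m => s < power 2 m) ⟨s, lt_power_two s⟩
  have hm0 : m ≠ 0 := by
    rintro rfl
    rw [power_zero] at hm
    exact hs (Order.lt_one_iff.mp hm)
  obtain ⟨n, rfl⟩ := ModelPAm.exists_eq_add_one hm0
  obtain ⟨t, rfl⟩ := exists_add_of_le (not_lt.mp (hmin n (lt_add_one n)))
  rw [power_two_succ] at hm
  exact ⟨n, t, lt_of_add_lt_add_left hm, rfl⟩

end Power

section Bits

variable {M : Type} [lang.Structure M] [ModelISigma1 M]

/-- The finite set coded by `s`: the positions of the digit 1 in the binary expansion of `s`.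
The quotient is bounded by `s` to make membership Δ₁. -/
def bits (s : M) : Set M :=
  {x | ∃ q ≤ s, ∃ r < power 2 x, s = (2 * q + 1) * power 2 x + r}

theorem mem_bits_iff {x s : M} :
    x ∈ bits s ↔ ∃ q, ∃ r < power 2 x, s = (2 * q + 1) * power 2 x + r := by
  refine ⟨fun ⟨q, _, h⟩ => ⟨q, h⟩, fun ⟨q, r, hr, h⟩ => ⟨q, ?_, r, hr, h⟩⟩
  calc q ≤ 2 * q := le_mul_of_one_le_left' one_le_two
    _ ≤ 2 * q + 1 := le_self_add
    _ ≤ (2 * q + 1) * power 2 x :=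
      le_mul_of_one_le_right' (Order.one_le_iff_pos.mpr (power_two_pos x))
    _ ≤ s := h ▸ le_self_add

theorem power_two_le_of_mem_bits {x s : M} (h : x ∈ bits s) : power 2 x ≤ s := by
  obtain ⟨q, -, r, -, rfl⟩ := h
  calc power 2 x ≤ power 2 x + (2 * q * power 2 x + r) := le_self_add
    _ = (2 * q + 1) * power 2 x + r := by ring

theorem lt_of_mem_bits {x s : M} (h : x ∈ bits s) : x < s :=
  (lt_power_two x).trans_le (power_two_le_of_mem_bits h)

theorem lt_of_mem_bits_of_lt {x s n : M} (h : x ∈ bits s) (hs : s < power 2 n) : x < n := by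
  by_contra! hnx
  exact hs.not_ge ((power_le_power_right two_pos hnx).trans (power_two_le_of_mem_bits h))

@[simp] theorem bits_zero : bits (0 : M) = ∅ :=
  Set.eq_empty_of_forall_notMem fun _ h => not_lt_zero (lt_of_mem_bits h)

theorem exists_eq_two_mul_add_one {a c q : M} (h : a + 2 * c = 2 * q + 1) :
    ∃ q', a = 2 * q' + 1 := by
  have hcq : c ≤ q := by
    by_contra! hqc
    refine (lt_add_one (2 * q + 1)).not_ge ?_
    calc 2 * q + 1 + 1 = 2 * (q + 1) := by ring
      _ ≤ 2 * c := by gcongr; exact Order.add_one_le_iff.mpr hqc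
      _ ≤ a + 2 * c := le_add_self
      _ = 2 * q + 1 := h
  obtain ⟨d, rfl⟩ := exists_add_of_le hcq
  exact ⟨d, by grind⟩

theorem mem_bits_power_two_add {x n s : M} (hx : x < n) :
    x ∈ bits (power 2 n + s) ↔ x ∈ bits s := by
  obtain ⟨d, rfl⟩ := exists_add_of_le (Order.add_one_le_iff.mpr hx)
  have hp : power 2 (x + 1 + d) = 2 * power 2 d * power 2 x := by
    rw [power_add, power_two_succ]; ring
  rw [hp, mem_bits_iff, mem_bits_iff]
  refine ⟨fun ⟨q, r, hr, hq⟩ => ?_, fun ⟨q, r, hr, hq⟩ => ⟨q + power 2 d, r, hr, by rw [hq]; ring⟩⟩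
  obtain ⟨r', hr', a, rfl⟩ := exists_eq_mul_add (power_two_pos x) s
  have hdiv : (a + 2 * power 2 d) * power 2 x + r' = (2 * q + 1) * power 2 x + r := by
    rw [← hq]; ring
  obtain rfl := eq_of_mul_add_eq_mul_add hr' hr hdiv
  obtain ⟨q', rfl⟩ := exists_eq_two_mul_add_one
    (mul_right_cancel₀ (power_two_pos x).ne' (add_right_cancel hdiv))
  exact ⟨q', r', hr', rfl⟩

theorem bits_power_two_add {n s : M} (hs : s < power 2 n) :
    bits (power 2 n + s) = insert n (bits s) := by
  ext x
  rw [Set.mem_insert_iff]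
  rcases lt_trichotomy x n with hxn | rfl | hnx
  · rw [mem_bits_power_two_add hxn, or_iff_right hxn.ne]
  · exact iff_of_true (mem_bits_iff.mpr ⟨0, s, hs, by ring⟩) (.inl rfl)
  · have hlt : power 2 n + s < power 2 (n + 1) := by
      rw [power_two_succ]; gcongr
    refine iff_of_false (fun h => ?_) (not_or_intro hnx.ne' fun h => ?_)
    · exact (Order.lt_add_one_iff.mp (lt_of_mem_bits_of_lt h hlt)).not_gt hnx
    · exact (lt_of_mem_bits_of_lt h hs).not_gt hnx

section Definability

variable {Γ : Type} [Context M Γ] {m : ℕ} [NeZero m] [HasCollection M m]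

instance IsSigma.mem_bits (f g : Γ → M) [IsSigmaFun f] [IsSigmaFun g] :
    IsSigma M m (fun γ => f γ ∈ bits (g γ)) :=
  .comp₂ (R := fun x s => ∃ q ≤ s, ∃ r < power 2 x, s = (2 * q + 1) * power 2 x + r)
    inferInstance f g

instance IsPi.mem_bits (f g : Γ → M) [IsSigmaFun f] [IsSigmaFun g] :
    IsPi M m (fun γ => f γ ∈ bits (g γ)) :=
  .comp₂ (R := fun x s => ∃ q ≤ s, ∃ r < power 2 x, s = (2 * q + 1) * power 2 x + r)
    inferInstance f g

instance IsSigma.ball_bits {R : Γ → M → Prop} (f : Γ → M) [hf : IsSigmaFun f]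
    [h : IsSigma M m (fun p : Γ × M => R p.1 p.2)] :
    IsSigma M m (fun γ => ∀ x ∈ bits (f γ), R γ x) := by
  have := hf.comp (fun p : Γ × M => p.1)
  have bounded : IsSigma M m (fun γ => ∀ x < f γ, x ∈ bits (f γ) → R γ x) := inferInstance
  exact bounded.congr fun γ => ⟨fun h x _ => h x, fun h x hx => h x (lt_of_mem_bits hx) hx⟩

instance IsSigma.bits_subset (f g : Γ → M) [IsSigmaFun f] [IsSigmaFun g] :
    IsSigma M m (fun γ => bits (f γ) ⊆ bits (g γ)) :=
  .comp₂ (R := fun s t => ∀ x ∈ bits s, x ∈ bits t) inferInstance f g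

instance IsPi.bits_subset (f g : Γ → M) [IsSigmaFun f] [IsSigmaFun g] :
    IsPi M m (fun γ => bits (f γ) ⊆ bits (g γ)) :=
  .comp₂ (R := fun s t => ∀ x, x ∈ bits s → x ∈ bits t) inferInstance f g

end Definability

theorem le_of_bits_subset {s t : M} (h : bits s ⊆ bits t) : s ≤ t := by
  by_contra! hts
  obtain ⟨s, ⟨t, hts, hsub⟩, hmin⟩ :=
    exists_least (R := fun s => ∃ t < s, bits s ⊆ bits t) ⟨s, t, hts, h⟩
  obtain ⟨n, s', hs', rfl⟩ := exists_eq_power_two_add (pos_of_gt hts).ne'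
  rw [bits_power_two_add hs', Set.insert_subset_iff] at hsub
  obtain ⟨t', rfl⟩ := exists_add_of_le (power_two_le_of_mem_bits hsub.1)
  have hts' : t' < s' := lt_of_add_lt_add_left hts
  refine hmin s' (lt_add_of_pos_left _ (power_two_pos n)) ⟨t', hts', fun x hx => ?_⟩
  exact (mem_bits_power_two_add (lt_of_mem_bits_of_lt hx hs')).mp (hsub.2 hx)

theorem bits_injective : Function.Injective (bits : M → Set M) := fun _ _ h =>
  (le_of_bits_subset h.subset).antisymm (le_of_bits_subset h.superset)

theorem lt_power_two_of_forall_mem_bits {s n : M} (h : ∀ x ∈ bits s, x < n) : s < power 2 n := by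
  rcases eq_or_ne s 0 with rfl | hs
  · exact power_two_pos n
  · obtain ⟨k, t, ht, rfl⟩ := exists_eq_power_two_add hs
    have hk : k < n := h k (bits_power_two_add ht ▸ Set.mem_insert k _)
    calc power 2 k + t < power 2 k + power 2 k := by gcongr
      _ = power 2 (k + 1) := (power_two_succ k).symm
      _ ≤ power 2 n := power_le_power_right two_pos (Order.add_one_le_iff.mpr hk)

instance IsSigma.ball_bits_subset {Γ : Type} [Context M Γ] {m : ℕ} [NeZero m] [HasCollection M m]
    {R : Γ → M → Prop} (f : Γ → M) [hf : IsSigmaFun f]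
    [h : IsSigma M m (fun p : Γ × M => R p.1 p.2)] :
    IsSigma M m (fun γ => ∀ s, bits s ⊆ bits (f γ) → R γ s) := by
  have := hf.comp (fun p : Γ × M => p.1)
  have bounded : IsSigma M m (fun γ => ∀ s ≤ f γ, bits s ⊆ bits (f γ) → R γ s) := inferInstance
  exact bounded.congr fun γ => ⟨fun h s _ => h s, fun h s hs => h s (le_of_bits_subset hs) hs⟩

theorem exists_bits_eq {R : M → Prop} (n : M)
    (_ : IsSigma M 1 (fun p : Unit × M => R p.2) := by infer_instance)
    (_ : IsPi M 1 (fun p : Unit × M => R p.2) := by infer_instance) :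
    ∃ s, bits s = {x | x < n ∧ R x} := by
  have hR := fun Γ [Context M Γ] (f : Γ → M) [IsSigmaFun f] => IsSigma.comp₁ (R := R) ‹_› f
  have hR' := fun Γ [Context M Γ] (f : Γ → M) [IsSigmaFun f] => IsPi.comp₁ (R := R) ‹_› f
  suffices ∃ s < power 2 n, ∀ x < n, x ∈ bits s ↔ R x by
    obtain ⟨s, hs, h⟩ := this
    refine ⟨s, Set.ext fun x => ⟨fun hx => ?_, fun hx => (h x hx.1).mpr hx.2⟩⟩
    have hxn := lt_of_mem_bits_of_lt hx hs
    exact ⟨hxn, (h x hxn).mp hx⟩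
  refine sigma_induction (R := fun n => ∃ s < power 2 n, ∀ x < n, x ∈ bits s ↔ R x)
    ⟨0, power_two_pos 0, fun _ h => absurd h not_lt_zero⟩ (fun n ⟨s, hs, h⟩ => ?_) n
  by_cases hn : R n
  · refine ⟨power 2 n + s, by rw [power_two_succ]; gcongr, fun x hx => ?_⟩
    rw [bits_power_two_add hs, Set.mem_insert_iff]
    rcases (Order.lt_add_one_iff.mp hx).lt_or_eq with hx | rfl
    · rw [h x hx, or_iff_right hx.ne]
    · exact iff_of_true (.inl rfl) hn
  · refine ⟨s, hs.trans_le (power_le_power_right two_pos le_self_add), fun x hx => ?_⟩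
    rcases (Order.lt_add_one_iff.mp hx).lt_or_eq with hx | rfl
    · exact h x hx
    · exact iff_of_false (fun h => (lt_of_mem_bits_of_lt h hs).false) hn

theorem exists_bits_eq_union (s t : M) : ∃ w, bits w = bits s ∪ bits t := by
  obtain ⟨w, hw⟩ := exists_bits_eq (R := fun x => x ∈ bits s ∨ x ∈ bits t) (s + t)
  refine ⟨w, hw.trans (Set.ext fun x => and_iff_right_of_imp ?_)⟩
  rintro (hx | hx)
  · exact (lt_of_mem_bits hx).trans_le le_self_add
  · exact (lt_of_mem_bits hx).trans_le le_add_self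

theorem exists_bits_eq_diff_singleton (s a : M) : ∃ t, bits t = bits s \ {a} := by
  obtain ⟨t, ht⟩ := exists_bits_eq (R := fun x => x ∈ bits s ∧ x ≠ a) s
  exact ⟨t, ht.trans (Set.ext fun x => and_iff_right_of_imp fun hx => lt_of_mem_bits hx.1)⟩

/-- The code of `bits s ∪ bits t`. -/
noncomputable def unionBits (s t : M) : M := (exists_bits_eq_union s t).choose

@[simp] theorem bits_unionBits (s t : M) : bits (unionBits s t) = bits s ∪ bits t :=
  (exists_bits_eq_union s t).choose_spec

instance IsSigmaFun.unionBits {Γ : Type} [Context M Γ] (f g : Γ → M) [IsSigmaFun f]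
    [IsSigmaFun g] : IsSigmaFun (fun γ => unionBits (f γ) (g γ)) := by
  refine .comp₂ (F := ArithFC.unionBits) (.of_graph (G := fun p w =>
    (∀ x ∈ bits w, x ∈ bits p.1.2 ∨ x ∈ bits p.2) ∧ bits p.1.2 ⊆ bits w ∧ bits p.2 ⊆ bits w)
    inferInstance fun ⟨⟨_, s⟩, t⟩ w => ?_) f g
  rw [← bits_injective.eq_iff, bits_unionBits, Set.Subset.antisymm_iff, Set.union_subset_iff]
  rfl

/-- The code of `insert p (bits s)`. -/
noncomputable def insertBit (p s : M) : M := unionBits (power 2 p) s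

@[simp] theorem bits_insertBit (p s : M) : bits (insertBit p s) = insert p (bits s) := by
  have := bits_power_two_add (power_two_pos p)
  rw [add_zero, bits_zero] at this
  rw [insertBit, bits_unionBits, this, Set.insert_union, Set.empty_union]

instance IsSigmaFun.insertBit {Γ : Type} [Context M Γ] (f g : Γ → M) [IsSigmaFun f]
    [IsSigmaFun g] : IsSigmaFun (fun γ => insertBit (f γ) (g γ)) :=
  IsSigmaFun.unionBits (fun γ => ArithFC.power 2 (f γ)) g

theorem exists_eq_insertBit {s : M} (hs : s ≠ 0) :
    ∃ a t, s = insertBit a t ∧ ∀ x ∈ bits t, a < x := by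
  have hne : ∃ x, x ∈ bits s := by
    by_contra! h
    exact hs (bits_injective (by rw [bits_zero, Set.eq_empty_of_forall_notMem h]))
  obtain ⟨a, ha, hmin⟩ := exists_least hne
  obtain ⟨t, ht⟩ := exists_bits_eq_diff_singleton s a
  refine ⟨a, t, bits_injective ?_, fun x hx => ?_⟩
  · rw [bits_insertBit, ht, Set.insert_sdiff_singleton, Set.insert_eq_of_mem ha]
  · rw [ht] at hx
    exact (not_lt.mp fun h => hmin x h hx.1).lt_of_ne' hx.2

end Bits

/-! ### Cardinality of bitsets -/

section Card

variable {M : Type} [lang.Structure M] [ModelISigma1 M] {Γ : Type} [Context M Γ]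

open Classical in
theorem exists_bitCount (M : Type) [lang.Structure M] [ModelISigma1 M] :
    ∃ f : Unit × M → M → M, (∀ γ, f γ 0 = 0) ∧
      (∀ γ n, f γ (n + 1) = f γ n + if n ∈ bits γ.2 then 1 else 0) ∧
      IsSigmaFun (fun p : (Unit × M) × M => f p.1 p.2) :=
  exists_primitive_recursion (Γ := Unit × M) (fun _ => 0)
    (fun γ n v => v + if n ∈ bits γ.2 then 1 else 0) inferInstance

/-- The number of elements of `bits s` below `n`. -/
noncomputable def bitCount (s n : M) : M := (exists_bitCount M).choose ((), s) n

@[simp] theorem bitCount_zero (s : M) : bitCount s 0 = 0 := (exists_bitCount M).choose_spec.1 _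

open Classical in
theorem bitCount_succ (s n : M) :
    bitCount s (n + 1) = bitCount s n + if n ∈ bits s then 1 else 0 :=
  (exists_bitCount M).choose_spec.2.1 _ _

theorem bitCount_succ_of_mem {s n : M} (h : n ∈ bits s) :
    bitCount s (n + 1) = bitCount s n + 1 := by
  rw [bitCount_succ, if_pos h]

instance IsSigmaFun.bitCount (f g : Γ → M) [IsSigmaFun f] [IsSigmaFun g] :
    IsSigmaFun (fun γ => bitCount (f γ) (g γ)) :=
  .comp₂ (F := ArithFC.bitCount) (exists_bitCount M).choose_spec.2.2 f g

theorem bitCount_congr {s t n : M} (h : ∀ x < n, x ∈ bits s ↔ x ∈ bits t) :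
    bitCount s n = bitCount t n := by
  refine sigma_induction_le (R := fun n => bitCount s n = bitCount t n) n (by simp)
    (fun i hi ih => ?_) n le_rfl
  classical rw [bitCount_succ, bitCount_succ, ih, if_congr (h i hi) rfl rfl]

theorem bitCount_add_of_forall_notMem {s a b : M} (h : ∀ x, a ≤ x → x ∉ bits s) :
    bitCount s (a + b) = bitCount s a := by
  refine sigma_induction (R := fun b => bitCount s (a + b) = bitCount s a) (by simp)
    (fun i ih => ?_) b
  rw [← add_assoc, bitCount_succ, if_neg (h _ le_self_add), add_zero, ih]

theorem bitCount_mono (s : M) : Monotone (bitCount s) := by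
  intro a b hab
  obtain ⟨d, rfl⟩ := exists_add_of_le hab
  refine sigma_induction (R := fun d => bitCount s a ≤ bitCount s (a + d)) (by simp)
    (fun i ih => ?_) d
  rw [← add_assoc, bitCount_succ]
  exact ih.trans le_self_add

theorem bitCount_lt_bitCount {s x n : M} (h : x ∈ bits s) (hx : x < n) :
    bitCount s x < bitCount s n :=
  calc bitCount s x < bitCount s x + 1 := lt_add_one _
    _ = bitCount s (x + 1) := (bitCount_succ_of_mem h).symm
    _ ≤ bitCount s n := bitCount_mono s (Order.add_one_le_iff.mpr hx)

theorem exists_bitCount_eq {s i n : M} (hi : i < bitCount s n) :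
    ∃ p < n, p ∈ bits s ∧ bitCount s p = i := by
  refine sigma_induction (R := fun n => i < bitCount s n → ∃ p < n, p ∈ bits s ∧ bitCount s p = i)
    (fun h => absurd (bitCount_zero s ▸ h) not_lt_zero) (fun n ih hi => ?_) n inferInstance hi
  rcases lt_or_ge i (bitCount s n) with hlt | hge
  · obtain ⟨p, hp, h⟩ := ih hlt
    exact ⟨p, hp.trans (lt_add_one n), h⟩
  · rw [bitCount_succ] at hi
    split_ifs at hi with hn
    · exact ⟨n, lt_add_one n, hn, hge.antisymm (Order.lt_add_one_iff.mp hi)⟩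
    · exact absurd (add_zero (bitCount s n) ▸ hi) hge.not_gt

theorem bitCount_le_add {s t u : M} (h : bits s ⊆ bits t ∪ bits u) (n : M) :
    bitCount s n ≤ bitCount t n + bitCount u n := by
  refine sigma_induction (R := fun n => bitCount s n ≤ bitCount t n + bitCount u n) (by simp)
    (fun n ih => ?_) n
  have := @h n
  simp only [bitCount_succ, Set.mem_union] at this ⊢
  have := zero_lt_one (α := M)
  split_ifs <;> grind

theorem bitCount_insertBit {p u : M} (hp : p ∉ bits u) {n : M} (hn : p < n) :
    bitCount (insertBit p u) n = bitCount u n + 1 := by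
  obtain ⟨d, rfl⟩ := exists_add_of_le (Order.add_one_le_iff.mpr hn)
  refine sigma_induction
    (R := fun d => bitCount (insertBit p u) (p + 1 + d) = bitCount u (p + 1 + d) + 1)
    ?_ (fun i ih => ?_) d
  · rw [add_zero, bitCount_succ_of_mem (by simp), bitCount_succ, if_neg hp, add_zero,
      bitCount_congr (t := u) (fun x hx => by simp [hx.ne])]
  · have hne : p + 1 + i ≠ p := ((lt_add_one p).trans_le le_self_add).ne'
    have hmem : p + 1 + i ∈ bits (insertBit p u) ↔ p + 1 + i ∈ bits u := by simp [hne]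
    classical rw [← add_assoc, bitCount_succ, bitCount_succ, ih, if_congr hmem rfl rfl,
      add_right_comm]

/-- The cardinality of `bits s`. All elements of `bits s` are below `s`. -/
noncomputable def bitCard (s : M) : M := bitCount s s

instance IsSigmaFun.bitCard (f : Γ → M) [IsSigmaFun f] : IsSigmaFun (fun γ => bitCard (f γ)) :=
  IsSigmaFun.bitCount f f

theorem bitCard_eq_bitCount {s n : M} (h : ∀ x ∈ bits s, x < n) : bitCard s = bitCount s n :=
  calc bitCount s s = bitCount s (s + n) :=
        (bitCount_add_of_forall_notMem fun _ hx hm => (lt_of_mem_bits hm).not_ge hx).symm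
    _ = bitCount s (n + s) := by rw [add_comm]
    _ = bitCount s n := bitCount_add_of_forall_notMem fun x hx hm => (h x hm).not_ge hx

@[simp] theorem bitCard_zero : bitCard (0 : M) = 0 := bitCount_zero _

theorem ne_zero_of_bitCard_pos {s : M} (h : 0 < bitCard s) : s ≠ 0 := by
  rintro rfl
  exact (bitCard_zero (M := M) ▸ h).false

theorem bitCount_lt_bitCard {s x : M} (h : x ∈ bits s) : bitCount s x < bitCard s :=
  bitCount_lt_bitCount h (lt_of_mem_bits h)

theorem bitCard_le_add {s t u : M} (h : bits s ⊆ bits t ∪ bits u) :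
    bitCard s ≤ bitCard t + bitCard u := by
  have bound {v : M} (hv : v ≤ s + t + u) : bitCard v = bitCount v (s + t + u) :=
    bitCard_eq_bitCount fun _ hx => (lt_of_mem_bits hx).trans_le hv
  rw [bound (add_assoc s t u ▸ le_self_add), bound (le_add_self.trans le_self_add),
    bound le_add_self]
  exact bitCount_le_add h _

theorem bitCard_le_bitCard {s t : M} (h : bits s ⊆ bits t) : bitCard s ≤ bitCard t := by
  simpa using bitCard_le_add (u := 0) (h.trans Set.subset_union_left)

theorem bitCard_insertBit {p u : M} (hp : p ∉ bits u) :
    bitCard (insertBit p u) = bitCard u + 1 := by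
  have hu : ∀ x ∈ bits u, x < u + (p + 1) := fun _ hx => (lt_of_mem_bits hx).trans_le le_self_add
  have hpu : p < u + (p + 1) := (lt_add_one p).trans_le le_add_self
  rw [bitCard_eq_bitCount hu, ← bitCount_insertBit hp hpu]
  exact bitCard_eq_bitCount (by simpa using ⟨hpu, hu⟩)

theorem eq_of_bits_subset_of_bitCard_le {r s : M} (h : bits r ⊆ bits s)
    (hc : bitCard s ≤ bitCard r) : r = s := by
  refine bits_injective (h.antisymm fun x hx => ?_)
  by_contra hr
  have hlt : bitCard r < bitCard (insertBit x r) := bitCard_insertBit hr ▸ lt_add_one _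
  have hle : bitCard (insertBit x r) ≤ bitCard s :=
    bitCard_le_bitCard (by simpa using Set.insert_subset hx h)
  exact (hlt.trans_le (hle.trans hc)).false

theorem exists_bits_eq_Iio (n : M) : ∃ s, bits s = Set.Iio n ∧ bitCard s = n := by
  obtain ⟨s, hs⟩ := exists_bits_eq (R := fun _ => True) n
  have mem (x : M) : x ∈ bits s ↔ x < n := by simp [hs]
  refine ⟨s, Set.ext mem, ?_⟩
  rw [bitCard_eq_bitCount fun x => (mem x).mp]
  refine sigma_induction_le (R := fun i => bitCount s i = i) n (bitCount_zero s)
    (fun i hi ih => ?_) n le_rfl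
  rw [bitCount_succ_of_mem ((mem i).mpr hi), ih]

theorem exists_bits_subset_bitCard_eq {s n : M} (h : n ≤ bitCard s) :
    ∃ t, bits t ⊆ bits s ∧ bitCard t = n := by
  rcases h.lt_or_eq with h | rfl
  · obtain ⟨p, -, -, rfl⟩ := exists_bitCount_eq h
    obtain ⟨t, ht⟩ := exists_bits_eq (R := fun x => x ∈ bits s) p
    refine ⟨t, fun x hx => (ht ▸ hx).2, ?_⟩
    rw [bitCard_eq_bitCount fun x hx => (ht ▸ hx).1]
    exact bitCount_congr fun x hx => by simp [ht, hx]
  · exact ⟨s, subset_rfl, rfl⟩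

end Card

/-! ### The finite Ramsey theorem for definable functions -/

section Ramsey

variable {M : Type} [lang.Structure M] [ModelISigma1 M]

theorem exists_eq_on_bits {f : M → M} (hf : IsSigmaFun (fun p : Unit × M => f p.2)) {k P : M}
    (hk : ∀ x ∈ bits P, f x < k) :
    ∃ P', bits P' ⊆ bits P ∧ (∀ x ∈ bits P', ∀ y ∈ bits P', f x = f y) ∧
      bitCard P ≤ k * bitCard P' := by
  have := fun Γ [Context M Γ] (g : Γ → M) [IsSigmaFun g] => hf.comp₁ (F := f) g
  refine sigma_induction (R := fun c => ∀ Q, bits Q ⊆ bits P → (∀ x ∈ bits Q, f x < c) →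
      ∃ P', bits P' ⊆ bits Q ∧ (∀ x ∈ bits P', ∀ y ∈ bits P', f x = f y) ∧
        bitCard Q ≤ c * bitCard P') (fun Q _ h => ?_) (fun c ih Q hQP h => ?_) k
    (by infer_instance) P subset_rfl hk
  · have hQ : Q = 0 := bits_injective <| by
      rw [bits_zero, Set.eq_empty_of_forall_notMem fun x hx => not_lt_zero (h x hx)]
    exact ⟨Q, subset_rfl, by simp [hQ]⟩
  · obtain ⟨E, hE⟩ := exists_bits_eq (R := fun x => x ∈ bits Q ∧ f x = c) Q
    obtain ⟨Q', hQ'⟩ := exists_bits_eq (R := fun x => x ∈ bits Q ∧ f x ≠ c) Q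
    have hcover : bits Q ⊆ bits Q' ∪ bits E := fun x hx => by
      rw [hE, hQ']
      by_cases hxc : f x = c
      · exact .inr ⟨lt_of_mem_bits hx, hx, hxc⟩
      · exact .inl ⟨lt_of_mem_bits hx, hx, hxc⟩
    have hE' : ∀ x ∈ bits E, x ∈ bits Q ∧ f x = c := fun x hx => (hE ▸ hx).2
    have hQ'Q : ∀ x ∈ bits Q', x ∈ bits Q ∧ f x ≠ c := fun x hx => (hQ' ▸ hx).2
    obtain ⟨P', hP', heq, hcard⟩ := ih Q' (fun x hx => hQP (hQ'Q x hx).1) fun x hx =>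
      (Order.lt_add_one_iff.mp (h x (hQ'Q x hx).1)).lt_of_ne (hQ'Q x hx).2
    have hsum : bitCard Q ≤ c * bitCard P' + bitCard E :=
      (bitCard_le_add hcover).trans (by gcongr)
    rcases le_total (bitCard E) (bitCard P') with hle | hle
    · refine ⟨P', fun x hx => (hQ'Q x (hP' hx)).1, heq, hsum.trans ?_⟩
      rw [add_one_mul]
      gcongr
    · refine ⟨E, fun x hx => (hE' x hx).1, fun x hx y hy => ?_, hsum.trans ?_⟩
      · rw [(hE' x hx).2, (hE' y hy).2]
      · rw [add_one_mul]
        gcongr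

/-- For every `v ⊆ S` with the same elements `≥ n` as `w`, the function `h v` is constant on `P`.
This is the induction hypothesis making all `h v` with `v ⊆ S` constant on a common set. -/
def IsConstAbove (h : M → M → M) (S n w P : M) : Prop :=
  ∀ v, bits v ⊆ bits S → (∀ x ∈ bits S, n ≤ x → (x ∈ bits v ↔ x ∈ bits w)) →
    ∀ x ∈ bits P, ∀ y ∈ bits P, h v x = h v y

theorem IsConstAbove.succ {h : M → M → M} {S n w w₀ P : M} (hw₀ : bits w₀ = bits w \ {n})
    (h₁ : IsConstAbove h S n (insertBit n w) P) (h₀ : IsConstAbove h S n w₀ P) :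
    IsConstAbove h S (n + 1) w P := by
  intro v hv hvw
  by_cases hnv : n ∈ bits v
  · refine h₁ v hv fun z hz hnz => ?_
    rw [bits_insertBit, Set.mem_insert_iff]
    rcases hnz.eq_or_lt with rfl | hnz
    · exact iff_of_true hnv (.inl rfl)
    · rw [hvw z hz (Order.add_one_le_iff.mpr hnz), or_iff_right hnz.ne']
  · refine h₀ v hv fun z hz hnz => ?_
    rw [hw₀]
    rcases hnz.eq_or_lt with rfl | hnz
    · exact iff_of_false hnv fun hz => hz.2 rfl
    · rw [hvw z hz (Order.add_one_le_iff.mpr hnz)]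
      exact (and_iff_left hnz.ne').symm

theorem IsConstAbove.succ_of_notMem {h : M → M → M} {S n w P : M} (hn : n ∉ bits S)
    (hP : IsConstAbove h S n w P) : IsConstAbove h S (n + 1) w P :=
  fun v hv hvw => hP v hv fun x hx hnx => hvw x hx <|
    Order.add_one_le_iff.mpr (hnx.lt_of_ne (ne_of_mem_of_not_mem hx hn).symm)

theorem isConstAbove_zero {h : M → M → M} {S w P : M} (hw : bits w ⊆ bits S)
    (heq : ∀ x ∈ bits P, ∀ y ∈ bits P, h w x = h w y) : IsConstAbove h S 0 w P := by
  intro v hv hvw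
  obtain rfl : v = w := bits_injective <| Set.ext fun x =>
    ⟨fun hx => (hvw x (hv hx) zero_le).mp hx, fun hx => (hvw x (hw hx) zero_le).mpr hx⟩
  exact heq

theorem exists_eq_on_bits_of_bits_subset {h : M → M → M}
    (hh : IsSigmaFun (fun p : (Unit × M) × M => h p.1.2 p.2)) {k : M} (hk : ∀ v x, h v x < k)
    (S P : M) :
    ∃ P', bits P' ⊆ bits P ∧
      (∀ v, bits v ⊆ bits S → ∀ x ∈ bits P', ∀ y ∈ bits P', h v x = h v y) ∧
      bitCard P ≤ power k (power 2 (bitCard S)) * bitCard P' := by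
  have := fun Γ [Context M Γ] (f g : Γ → M) [IsSigmaFun f] [IsSigmaFun g] => hh.comp₂ f g
  suffices H : ∀ w, bits w ⊆ bits S → ∀ Q, bits Q ⊆ bits P → ∃ P', bits P' ⊆ bits Q ∧
      IsConstAbove h S S w P' ∧ bitCard Q ≤ power k (power 2 (bitCount S S)) * bitCard P' by
    obtain ⟨P', hP', heq, hcard⟩ := H 0 (by simp) P subset_rfl
    exact ⟨P', hP', fun v hv => heq v hv fun x hx hSx => absurd (lt_of_mem_bits hx) hSx.not_gt,
      hcard⟩
  refine sigma_induction (R := fun n => ∀ w, bits w ⊆ bits S → ∀ Q, bits Q ⊆ bits P →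
    ∃ P', bits P' ⊆ bits Q ∧ IsConstAbove h S n w P' ∧
      bitCard Q ≤ power k (power 2 (bitCount S n)) * bitCard P')
    (fun w hw Q _ => ?_) (fun n ih w hw Q hQ => ?_) S (by unfold IsConstAbove; infer_instance)
  · obtain ⟨P', hP', heq, hcard⟩ := exists_eq_on_bits
      (hh.comp₂ (fun _ : Unit × M => w) (fun p => p.2)) (P := Q) (fun x _ => hk w x)
    refine ⟨P', hP', isConstAbove_zero hw heq, ?_⟩
    rwa [bitCount_zero, power_zero, ← zero_add 1, power_succ, power_zero, one_mul]
  by_cases hn : n ∈ bits S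
  · obtain ⟨w₀, hw₀⟩ := exists_bits_eq_diff_singleton w n
    obtain ⟨P₁, hP₁, heq₁, hcard₁⟩ := ih (insertBit n w)
      (by simpa using Set.insert_subset hn hw) Q hQ
    obtain ⟨P₂, hP₂, heq₂, hcard₂⟩ := ih w₀ (hw₀ ▸ Set.sdiff_subset.trans hw) P₁ (hP₁.trans hQ)
    have heq₁' : IsConstAbove h S n (insertBit n w) P₂ :=
      fun v hv hvw x hx y hy => heq₁ v hv hvw x (hP₂ hx) y (hP₂ hy)
    refine ⟨P₂, hP₂.trans hP₁, heq₁'.succ hw₀ heq₂, ?_⟩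
    rw [bitCount_succ_of_mem hn, power_two_succ, power_add, mul_assoc]
    exact hcard₁.trans (by gcongr)
  · obtain ⟨P', hP', heq, hcard⟩ := ih w hw Q hQ
    refine ⟨P', hP', heq.succ_of_notMem hn, ?_⟩
    classical rwa [bitCount_succ, if_neg hn, add_zero]

/-- The pair `(S, P)` of an Erdős–Rado construction for `g`: `bits S` lies below the reservoir
`bits P`, and `g (insert p u)`, for `u ⊆ S` and `p ∈ S ∪ P` above `u`, is the same for all such
`p`. Elements of `P` are above every `u ⊆ S`. -/
def IsEndHomogeneous (g : M → M) (S P : M) : Prop :=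
  (∀ x ∈ bits S, ∀ y ∈ bits P, x < y) ∧ ∀ u, bits u ⊆ bits S → ∀ q ∈ bits P,
    (∀ p ∈ bits P, g (insertBit p u) = g (insertBit q u)) ∧
    ∀ p ∈ bits S, (∀ x ∈ bits u, x < p) → g (insertBit p u) = g (insertBit q u)

variable {g : M → M} {k : M}

theorem exists_isEndHomogeneous_zero (hg : IsSigmaFun (fun p : Unit × M => g p.2))
    (hk : ∀ s, g s < k) (A : M) :
    ∃ P, bits P ⊆ bits A ∧ IsEndHomogeneous g 0 P ∧ bitCard A ≤ k * bitCard P := by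
  obtain ⟨P, hPA, heq, hcard⟩ := exists_eq_on_bits (f := fun p => g (insertBit p 0)) (P := A)
    (hg.comp₁ (fun p : Unit × M => insertBit p.2 0)) (fun p _ => hk _)
  refine ⟨P, hPA, ⟨by simp, fun u hu q hq => ?_⟩, hcard⟩
  obtain rfl : u = 0 := bits_injective (hu.antisymm (by simp))
  exact ⟨fun p hp => heq p hp q hq, by simp⟩

theorem IsEndHomogeneous.insertBit {S a P P' : M} (h : IsEndHomogeneous g S (insertBit a P))
    (ha : ∀ x ∈ bits P, a < x) (hP' : bits P' ⊆ bits P)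
    (heq : ∀ v, bits v ⊆ bits S → ∀ p ∈ bits P', ∀ q ∈ bits P',
      g (ArithFC.insertBit p (ArithFC.insertBit a v)) =
        g (ArithFC.insertBit q (ArithFC.insertBit a v))) :
    IsEndHomogeneous g (ArithFC.insertBit a S) P' := by
  obtain ⟨hlt, hS⟩ := h
  simp only [bits_insertBit, Set.mem_insert_iff] at hlt hS
  have subset_of_notMem {u : M} (hu : bits u ⊆ insert a (bits S)) (hau : a ∉ bits u) :
      bits u ⊆ bits S := (Set.subset_insert_iff_of_notMem hau).mp hu
  refine ⟨?_, fun u hu q hq => ⟨fun p hp => ?_, ?_⟩⟩ <;>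
    simp only [bits_insertBit, Set.mem_insert_iff] at *
  · rintro x (rfl | hx) y hy
    · exact ha y (hP' hy)
    · exact hlt x hx y (.inr (hP' hy))
  · by_cases hau : a ∈ bits u
    · obtain ⟨v, hv⟩ := exists_bits_eq_diff_singleton u a
      obtain rfl : u = ArithFC.insertBit a v := bits_injective (by simp [hv, hau])
      exact heq v (hv ▸ Set.sdiff_singleton_subset_iff.mpr hu) p hp q hq
    · exact (hS u (subset_of_notMem hu hau) q (.inr (hP' hq))).1 p (.inr (hP' hp))
  · rintro p (rfl | hp) hup
    · exact (hS u (subset_of_notMem hu fun hpu => (hup p hpu).false) q (.inr (hP' hq))).1 p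
        (.inl rfl)
    · have hau : a ∉ bits u := fun hau => (hup a hau).not_gt (hlt p hp a (.inl rfl))
      exact (hS u (subset_of_notMem hu hau) q (.inr (hP' hq))).2 p hp hup

theorem IsEndHomogeneous.exists_insertBit (hg : IsSigmaFun (fun p : Unit × M => g p.2))
    (hk : ∀ s, g s < k) {S P : M} (h : IsEndHomogeneous g S P) (hP : P ≠ 0) :
    ∃ a ∈ bits P, a ∉ bits S ∧ ∃ P', bits P' ⊆ bits P ∧
      IsEndHomogeneous g (ArithFC.insertBit a S) P' ∧
      bitCard P ≤ power k (power 2 (bitCard S)) * bitCard P' + 1 := by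
  obtain ⟨a, P, rfl, ha⟩ := exists_eq_insertBit hP
  obtain ⟨P', hP', heq, hcard⟩ := exists_eq_on_bits_of_bits_subset
    (h := fun v p => g (ArithFC.insertBit p (ArithFC.insertBit a v)))
    (hg.comp₁ (fun p : (Unit × M) × M => ArithFC.insertBit p.2 (ArithFC.insertBit a p.1.2)))
    (fun _ _ => hk _) S P
  have haP : a ∉ bits P := fun h => (ha a h).false
  have haS : a ∉ bits S := fun haS => (h.1 a haS a (by simp)).false
  refine ⟨a, by simp, haS, P', ?_, h.insertBit ha hP' heq, ?_⟩
  · rw [bits_insertBit]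
    exact hP'.trans (Set.subset_insert _ _)
  · rw [bitCard_insertBit haP]
    gcongr

theorem power_le_of_power_succ_le {K j c : M} (hK : 0 < K)
    (h : power (K + 1) (j + 1) ≤ K * c + 1) : power (K + 1) j ≤ c := by
  refine le_of_mul_le_mul_left (le_of_add_le_add_right (a := 1) ?_) hK
  calc K * power (K + 1) j + 1 ≤ K * power (K + 1) j + power (K + 1) j := by
        gcongr
        exact Order.one_le_iff_pos.mpr (power_pos (by positivity) j)
    _ = power (K + 1) (j + 1) := by rw [power_succ]; ring
    _ ≤ K * c + 1 := h

theorem exists_end_homogeneous_subset (hg : IsSigmaFun (fun p : Unit × M => g p.2))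
    (hk : ∀ s, g s < k) {A m : M} (hA : k * power (power k (power 2 m) + 1) m ≤ bitCard A) :
    ∃ S, bits S ⊆ bits A ∧ bitCard S = m ∧ ∃ q, ∀ u, bits u ⊆ bits S → ∀ p ∈ bits S,
      (∀ x ∈ bits u, x < p) → g (insertBit p u) = g (insertBit q u) := by
  have hk₀ : 0 < k := zero_le.trans_lt (hk 0)
  have := fun Γ [Context M Γ] (f : Γ → M) [IsSigmaFun f] => hg.comp₁ f
  set K := power k (power 2 m)
  suffices H : ∃ S, bits S ⊆ bits A ∧ bitCard S = m ∧ ∃ P, bits P ⊆ bits A ∧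
      IsEndHomogeneous g S P ∧ ∃ j, m + j = m ∧ power (K + 1) j ≤ bitCard P by
    obtain ⟨S, hSA, hS, P, -, hSP, j, -, hP⟩ := H
    have hP₀ : P ≠ 0 := ne_zero_of_bitCard_pos ((power_pos (by positivity) _).trans_le hP)
    obtain ⟨q, P, rfl, -⟩ := exists_eq_insertBit hP₀
    exact ⟨S, hSA, hS, q, fun u hu => (hSP.2 u hu q (by simp)).2⟩
  refine sigma_induction_le m
    (R := fun i => ∃ S, bits S ⊆ bits A ∧ bitCard S = i ∧ ∃ P, bits P ⊆ bits A ∧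
      IsEndHomogeneous g S P ∧ ∃ j, i + j = m ∧ power (K + 1) j ≤ bitCard P)
    ?_ (fun i hi ih => ?_) m le_rfl (by unfold IsEndHomogeneous; infer_instance)
  · obtain ⟨P, hPA, hP, hcard⟩ := exists_isEndHomogeneous_zero hg hk A
    exact ⟨0, by simp, by simp, P, hPA, hP, m, zero_add m,
      le_of_mul_le_mul_left (hA.trans hcard) hk₀⟩
  · obtain ⟨S, hSA, hS, P, hPA, hSP, j, hj, hP⟩ := ih
    have hj₀ : j ≠ 0 := by
      rintro rfl
      exact hi.ne (add_zero i ▸ hj)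
    obtain ⟨j, rfl⟩ := ModelPAm.exists_eq_add_one hj₀
    have hP₀ : P ≠ 0 := ne_zero_of_bitCard_pos ((power_pos (by positivity) _).trans_le hP)
    obtain ⟨a, haP, haS, P', hP'P, hSP', hcard⟩ := hSP.exists_insertBit hg hk hP₀
    refine ⟨insertBit a S, by simpa using Set.insert_subset (hPA haP) hSA,
      by rw [bitCard_insertBit haS, hS], P', hP'P.trans hPA, hSP', j, by rw [← hj]; ring, ?_⟩
    refine power_le_of_power_succ_le (power_pos hk₀ _) ?_
    calc power (K + 1) (j + 1) ≤ bitCard P := hP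
      _ ≤ power k (power 2 (bitCard S)) * bitCard P' + 1 := hcard
      _ ≤ K * bitCard P' + 1 := by
          gcongr
          exact power_le_power_right hk₀ (power_le_power_right two_pos (hS ▸ hi.le))

/-- The colour under `col` of a union `r ∪ v`, with `r, v ⊆ A`, `r < v` and `|v| = t`, does not
depend on `v`: it is the colour of `r ∪ w`. -/
def IsTailHomogeneous (col : M → M) (A w t : M) : Prop :=
  ∀ r, bits r ⊆ bits A → ∀ v, bits v ⊆ bits A → (∀ x ∈ bits r, ∀ y ∈ bits v, x < y) →
    bitCard v = t → col (unionBits r v) = col (unionBits r w)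

variable {col : M → M}

theorem isTailHomogeneous_zero (col : M → M) (A : M) : IsTailHomogeneous col A 0 0 := by
  intro r _ v _ _ hv
  rw [eq_of_bits_subset_of_bitCard_le (r := 0) (s := v) (by simp) (by simp [hv])]

theorem IsTailHomogeneous.exists_succ (hcol : IsSigmaFun (fun p : Unit × M => col p.2))
    (hk : ∀ s, col s < k) {A w t m : M} (h : IsTailHomogeneous col A w t)
    (hA : k * power (power k (power 2 m) + 1) m ≤ bitCard A) :
    ∃ S, bits S ⊆ bits A ∧ bitCard S = m ∧ ∃ w', IsTailHomogeneous col S w' (t + 1) := by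
  obtain ⟨S, hSA, hS, q, heq⟩ := exists_end_homogeneous_subset (g := fun u => col (unionBits u w))
    (hcol.comp₁ (fun p : Unit × M => unionBits p.2 w)) (fun _ => hk _) hA
  refine ⟨S, hSA, hS, insertBit q w, fun r hr v hv hrv hvt => ?_⟩
  have hv₀ : 0 < bitCard v := hvt ▸ add_pos_of_nonneg_of_pos zero_le zero_lt_one
  obtain ⟨p, v, rfl, hpv⟩ := exists_eq_insertBit (ne_zero_of_bitCard_pos hv₀)
  rw [bitCard_insertBit fun hp => (hpv p hp).false] at hvt
  simp only [bits_insertBit, Set.insert_subset_iff, Set.mem_insert_iff] at hv hrv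
  have union_insertBit (p r v : M) :
      unionBits r (insertBit p v) = unionBits (insertBit p r) v :=
    bits_injective (by simp [Set.insert_union, Set.union_insert])
  rw [union_insertBit, union_insertBit, ← heq r hr p hv.1 fun x hx => hrv x hx p (.inl rfl)]
  refine h _ ?_ v (hv.2.trans hSA) ?_ (add_right_cancel hvt)
  · rw [bits_insertBit]
    exact Set.insert_subset (hSA hv.1) (hr.trans hSA)
  · rw [bits_insertBit]
    rintro x (rfl | hx) y hy
    · exact hpv y hy
    · exact hrv x hx y (.inr hy)

theorem exists_ramsey (e x k : M) :
    ∃ y, ∀ col : M → M, IsSigmaFun (fun p : Unit × M => col p.2) → (∀ s, col s < k) →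
      ∃ H, bits H ⊆ Set.Iio y ∧ bitCard H = x ∧
        ∃ i, ∀ s, bits s ⊆ bits H → bitCard s = e → col s = i := by
  obtain ⟨T, hT₀, hT, hTdef⟩ := exists_primitive_recursion (Γ := Unit) (fun _ => x)
    (fun _ _ m => k * power (power k (power 2 m) + 1) m) inferInstance
  refine ⟨T () e, fun col hcol hk => ?_⟩
  have := fun Γ [Context M Γ] (f : Γ → M) [IsSigmaFun f] => hcol.comp₁ f
  have := fun Γ [Context M Γ] (f : Γ → M) [IsSigmaFun f] => hTdef.comp₁ (F := T ()) f
  obtain ⟨B, hB, hBT⟩ := exists_bits_eq_Iio (T () e)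
  suffices H : ∃ A, bits A ⊆ bits B ∧ (∃ j, e + j = e ∧ T () j ≤ bitCard A) ∧
      ∃ w, IsTailHomogeneous col A w e by
    obtain ⟨A, hAB, ⟨j, hj, hTA⟩, w, hw⟩ := H
    obtain rfl : j = 0 := add_eq_left.mp hj
    obtain ⟨H, hHA, hH⟩ := exists_bits_subset_bitCard_eq (hT₀ () ▸ hTA)
    refine ⟨H, hB ▸ hHA.trans hAB, hH, col (unionBits 0 w), fun s hs hse => ?_⟩
    rw [← hw 0 (by simp) s (hs.trans hHA) (by simp) hse]
    exact congrArg col (bits_injective (by simp))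
  refine sigma_induction_le e (R := fun t => ∃ A, bits A ⊆ bits B ∧
      (∃ j, t + j = e ∧ T () j ≤ bitCard A) ∧ ∃ w, IsTailHomogeneous col A w t)
    ⟨B, subset_rfl, ⟨e, zero_add e, hBT.ge⟩, 0, isTailHomogeneous_zero col B⟩
    (fun t ht ih => ?_) e le_rfl (by unfold IsTailHomogeneous; infer_instance)
  obtain ⟨A, hAB, ⟨j, hj, hTA⟩, w, hw⟩ := ih
  have hj₀ : j ≠ 0 := by
    rintro rfl
    exact ht.ne (add_zero t ▸ hj)
  obtain ⟨j, rfl⟩ := ModelPAm.exists_eq_add_one hj₀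
  obtain ⟨S, hSA, hS, w', hw'⟩ := hw.exists_succ hcol hk (hT () j ▸ hTA)
  exact ⟨S, hSA.trans hAB, ⟨j, by rw [← hj]; ring, hS.ge⟩, w', hw'⟩

end Ramsey

/-! ### Codes of finite sets and of Σₙ₊₁-definable finite functions -/

section Codes

variable {M : Type} [lang.Structure M] [ModelISigma1 M]

theorem codesFinset_iff {c card : M} {X : Set M} :
    CodesFinset c X card ↔ ∃ s, IsPairC c card s ∧
      (∀ j < card, entry s j ∈ X ∧ ∀ i < j, entry s i < entry s j) ∧
      ∀ x ∈ X, ∃ i < card, entry s i = x := by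
  refine exists_congr fun s => and_congr_right fun _ => ?_
  simp only [← entry_eq_iff]
  grind

theorem exists_codesFinset_bits (u : M) : ∃ d, CodesFinset d (bits u) (bitCard u) := by
  obtain ⟨s, hs⟩ := exists_forall_lt_entry (m := 1) ModelISigma1.induction
    (F := fun i v => v ∈ bits u ∧ bitCount u v = i) inferInstance (bitCard u) fun i hi =>
      have ⟨p, _, h⟩ := exists_bitCount_eq hi
      ⟨p, h⟩
  obtain ⟨d, hd⟩ := exists_isPairC (bitCard u) s
  refine ⟨d, codesFinset_iff.mpr ⟨s, hd, fun j hj => ⟨(hs j hj).1, fun i hij => ?_⟩,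
    fun x hx => ?_⟩⟩
  · refine (bitCount_mono u).reflect_lt ?_
    rwa [(hs i (hij.trans hj)).2, (hs j hj).2]
  · have hxu := bitCount_lt_bitCard hx
    obtain ⟨hmem, hcount⟩ := hs _ hxu
    refine ⟨bitCount u x, hxu, ?_⟩
    rcases lt_trichotomy (entry s (bitCount u x)) x with h | h | h
    · exact absurd hcount (bitCount_lt_bitCount hmem h).ne
    · exact h
    · exact absurd hcount (bitCount_lt_bitCount hx h).ne'

theorem CodesFinset.exists_bits_eq {d e : M} {D : Set M} (h : CodesFinset d D e) :
    ∃ u, bits u = D ∧ bitCard u = e := by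
  obtain ⟨s, -, hs, surj⟩ := codesFinset_iff.mp h
  suffices H : ∃ u, (∀ x ∈ bits u, ∃ j < e, entry s j = x) ∧ (∀ j < e, entry s j ∈ bits u) ∧
      bitCard u = e by
    obtain ⟨u, sub, sup, hu⟩ := H
    refine ⟨u, Set.Subset.antisymm (fun x hx => ?_) fun x hx => ?_, hu⟩
    · obtain ⟨j, hj, rfl⟩ := sub x hx
      exact (hs j hj).1
    · obtain ⟨j, hj, rfl⟩ := surj x hx
      exact sup j hj
  refine sigma_induction_le e (R := fun i => ∃ u, (∀ x ∈ bits u, ∃ j < i, entry s j = x) ∧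
    (∀ j < i, entry s j ∈ bits u) ∧ bitCard u = i) ⟨0, by simp⟩ (fun i hi ih => ?_) e le_rfl
  obtain ⟨u, sub, sup, hu⟩ := ih
  have fresh : entry s i ∉ bits u := fun hmem => by
    obtain ⟨j, hj, hji⟩ := sub _ hmem
    exact ((hs i hi).2 j hj).ne hji
  refine ⟨insertBit (entry s i) u, ?_, ?_, by rw [bitCard_insertBit fresh, hu]⟩
  · simp only [bits_insertBit, Set.forall_mem_insert]
    refine ⟨⟨i, lt_add_one i, rfl⟩, fun x hx => ?_⟩
    obtain ⟨j, hj, hjx⟩ := sub x hx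
    exact ⟨j, hj.trans (lt_add_one i), hjx⟩
  · intro j hj
    rw [bits_insertBit]
    rcases (Order.lt_add_one_iff.mp hj).lt_or_eq with hj | rfl
    · exact .inr (sup j hj)
    · exact .inl rfl

instance IsSigma.codesFinset_bits {Γ : Type} [Context M Γ] {m : ℕ} [NeZero m] [HasCollection M m]
    (e : M) (f g : Γ → M) [IsSigmaFun f] [IsSigmaFun g] :
    IsSigma M m (fun γ => CodesFinset (f γ) (bits (g γ)) e) :=
  IsSigma.comp₂ (R := fun d u => CodesFinset d (bits u) e)
    (by simp only [codesFinset_iff, IsPairC]; infer_instance) f g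

variable {n : ℕ} [NeZero n]

-- After bounding the witnesses by collection, the function value is the only element of `[0, k)`
-- whose complement consists of values refuted by a Σₙ condition.
theorem exists_forall_lt_entry_of_unique (hI : ISig n M) (hB : BSig (n + 1) M) {F : M → M → Prop}
    (hF : IsSigma M (n + 1) (fun p : (Unit × M) × M => F p.1.2 p.2)) {N k : M}
    (total : ∀ u < N, ∃ i < k, F u i) (unique : ∀ u < N, ∀ i j, F u i → F u j → i = j) :
    ∃ s, ∀ u < N, entry s u < k ∧ F u (entry s u) := by
  have : HasCollection M n := ⟨hB.anti n.le_succ⟩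
  have : HasCollection M (n + 1) := ⟨hB⟩
  have ball_closed : SigmaBallClosed M n := sigmaBallClosed_of_bSig HasCollection.bSig
  obtain ⟨P, hP, hFP⟩ := ball_closed.exists_isPi hF
  have hP' : IsSigma M (n + 1)
      (fun p : ((Unit × M) × M) × M => P (((), p.1.1.2), p.2) p.1.2) :=
    hP.isSigma_succ.comp fun p : ((Unit × M) × M) × M => ((((), p.1.1.2), p.2), p.1.2)
  obtain ⟨b, hb⟩ : ∃ b, ∀ u < N, ∃ w < b, ∃ i < k, P (((), u), i) w :=
    hB _ (IsSigma.sigmaDef2 (R := fun u w => ∃ i < k, P (((), u), i) w) inferInstance) N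
      fun u hu => by
        obtain ⟨i, hi, hui⟩ := total u hu
        obtain ⟨w, hw⟩ := (hFP (((), u), i)).mp hui
        exact ⟨w, i, hi, hw⟩
  have hG : IsPi M n (fun p : (Unit × M) × M => ∃ w < b, P p w) := IsPi.bex (fun _ => b)
  have hG' := hG.comp fun p : ((Unit × M) × M) × M => (((), p.1.1.2), p.2)
  obtain ⟨s, hs⟩ := exists_forall_lt_entry hI
    (F := fun u i => i < k ∧ ∀ j < k, j ≠ i → ¬ ∃ w < b, P (((), u), j) w) inferInstance N
    fun u hu => by
      obtain ⟨w, -, i, hi, hw⟩ := hb u hu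
      refine ⟨i, hi, fun j _ hji ⟨v, _, hv⟩ => hji ?_⟩
      exact unique u hu j i ((hFP (((), u), j)).mpr ⟨v, hv⟩) ((hFP (((), u), i)).mpr ⟨w, hw⟩)
  refine ⟨s, fun u hu => ⟨(hs u hu).1, ?_⟩⟩
  obtain ⟨w, hwb, i, hi, hw⟩ := hb u hu
  obtain rfl : i = entry s u := by
    by_contra hne
    exact (hs u hu).2 i hi hne ⟨w, hwb, hw⟩
  exact (hFP _).mpr ⟨w, hw⟩

theorem IsColoring.exists_forall_entry (hI : ISig n M) (hB : BSig (n + 1) M) {e y k : M}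
    (hk : 0 < k) {C : M → M → Prop} (hC : IsColoring M (n + 1) e y k C) :
    ∃ s, ∀ u, bits u ⊆ Set.Iio y → bitCard u = e →
      entry s u < k ∧ ∀ d, CodesFinset d (bits u) e → C d (entry s u) := by
  obtain ⟨definable, total, unique⟩ := hC
  have : HasCollection M (n + 1) := ⟨hB⟩
  have := fun Γ [Context M Γ] (f g : Γ → M) [IsSigmaFun f] [IsSigmaFun g] =>
    definable.isSigma.comp₂ f g
  have mem_lt {u z : M} (hu : u < power 2 y) (hz : z ∈ bits u) : z < y := lt_of_mem_bits_of_lt hz hu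
  obtain ⟨s, hs⟩ := exists_forall_lt_entry_of_unique hI hB (N := power 2 y) (k := k)
    (F := fun u i => (bitCard u ≠ e ∧ i = 0) ∨
      (bitCard u = e ∧ ∃ d, CodesFinset d (bits u) e ∧ C d i)) inferInstance
    (fun u hu => by
      by_cases hue : bitCard u = e
      · obtain ⟨d, hd⟩ := exists_codesFinset_bits u
        rw [hue] at hd
        obtain ⟨i, hi, hCi⟩ := total d _ ⟨hd, fun _ => mem_lt hu⟩
        exact ⟨i, hi, .inr ⟨hue, d, hd, hCi⟩⟩
      · exact ⟨0, hk, .inl ⟨hue, rfl⟩⟩)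
    (fun u hu i j hi hj => by
      rcases hi with ⟨hue, rfl⟩ | ⟨hue, d, hd, hi⟩ <;>
        rcases hj with ⟨hue', rfl⟩ | ⟨hue', d', hd', hj⟩
      · rfl
      · exact absurd hue' hue
      · exact absurd hue hue'
      · exact unique d d' _ i j ⟨hd, fun _ => mem_lt hu⟩ ⟨hd', fun _ => mem_lt hu⟩ hi hj)
  refine ⟨s, fun u huy hue => ?_⟩
  obtain ⟨lt, ⟨hne, -⟩ | ⟨-, d', hd', hCd'⟩⟩ := hs u (lt_power_two_of_forall_mem_bits huy)
  · exact absurd hue hne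
  refine ⟨lt, fun d hd => ?_⟩
  obtain ⟨i, -, hi⟩ := total d _ ⟨hd, huy⟩
  rwa [← unique d d' _ i _ ⟨hd, huy⟩ ⟨hd', huy⟩ hi hCd']

theorem frt_of_bSig (hI : ISig n M) (hB : BSig (n + 1) M) (e : M) {k : M} (hk : 0 < k) :
    FRT M (n + 1) e k := by
  intro x
  obtain ⟨y, hy⟩ := exists_ramsey e x k
  refine ⟨y, fun C hC => ?_⟩
  obtain ⟨s, hs⟩ := hC.exists_forall_entry hI hB hk
  classical
  obtain ⟨H, hHy, hHx, i, hi⟩ := hy (fun u => if entry s u < k then entry s u else 0) inferInstance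
    fun u => by split_ifs with h; exacts [h, hk]
  obtain ⟨c, hc⟩ := exists_codesFinset_bits H
  refine ⟨c, bits H, hHx ▸ hc, hHy, i, fun d D hd hDH => ?_⟩
  obtain ⟨u, rfl, hue⟩ := hd.exists_bits_eq
  obtain ⟨lt, hCd⟩ := hs u (hDH.trans hHy) hue
  rw [← hi u hDH hue, if_pos lt]
  exact hCd d hd

end Codes

/-- For every `n ≥ 1`, PA⁻ + BΣ_{n+1} (which includes IΣn) proves
FRT^{<ω}(Σ_{n+1}). -/
theorem statement_5 (n : ℕ) (hn : 1 ≤ n) (M : Type) [lang.Structure M]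
    (hPA : PAm M) (hI : ISig n M) (hB : BSig (n + 1) M) :
    ∀ e k : M, (1 : M) ≤ e → (1 : M) ≤ k → FRT M (n + 1) e k := by
  have : NeZero n := ⟨Nat.one_le_iff_ne_zero.mp hn⟩
  have : ModelISigma1 M := { hPA with induction := hI.anti hn }
  intro e k _ hk
  exact frt_of_bSig hI hB e (Order.one_le_iff_pos.mp hk)

end ArithFC
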